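/- arXiv:2109.12728 — 2 statements merged into one kernel-verified Lean document; each statement's English description precedes it below -/
import Mathlib

section
/- Suppose f(x) > 0 almost surely and there exist p, q > 2 with (p−2)(q−2) > 4 such that E[|f(x)/μ(θ)|^p] < ∞ and E[(1 + |log(f(x)/μ(θ))|^q) · g(θ)^q] < ∞, where (θ, x) ∼ ν ⊗ κ. Then E[Δψ_{θ,ℓ}² · g(θ)²] = O(2^{−rℓ}) as ℓ → ∞, with r = min(p(q−2)/(2q), 2) ∈ (1, 2]. -/
open MeasureTheory ProbabilityTheory
open scoped ProbabilityTheory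


lemma aux_scalar (s : ℝ) (hs : 2 ≤ s) (t : ℝ) :
    |1 + t| ^ s ≤ 1 + s * t + (s ^ 2 + (s + 1) ^ s) * (t ^ 2 + |t| ^ s) := by
  have hs0 : 0 < s := by linarith
  have h1 : 0 ≤ (s + 1) ^ s := by positivity
  have h2 : 0 ≤ |t| ^ s := by positivity
  by_cases h : |s * t| ≤ 1
  · have ht : |t| ≤ 1 := by
      rw [abs_mul, abs_of_pos hs0] at h
      nlinarith [abs_nonneg t]
    have ht' := abs_le.1 ht
    have h3 : |1 + t| ^ s ≤ Real.exp (s * t) := by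
      rw [abs_of_nonneg (by linarith), mul_comm, Real.exp_mul]
      apply Real.rpow_le_rpow (by linarith) _ hs0.le
      linarith [Real.add_one_le_exp t]
    have h4 := (abs_le.1 (Real.abs_exp_sub_one_sub_id_le h)).2
    nlinarith [mul_nonneg h1 (sq_nonneg t), mul_nonneg h1 h2, mul_nonneg (sq_nonneg s) h2]
  · push Not at h
    have h' : 1 < s * |t| := by rwa [abs_mul, abs_of_pos hs0] at h
    have h3 : |1 + t| ^ s ≤ (s + 1) ^ s * |t| ^ s := by
      rw [← Real.mul_rpow (by linarith) (abs_nonneg _)]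
      apply Real.rpow_le_rpow (abs_nonneg _) _ hs0.le
      calc |1 + t| ≤ |1| + |t| := abs_add_le _ _
        _ ≤ (s + 1) * |t| := by rw [abs_one]; linarith
    have h5 : -(s * t) ≤ s ^ 2 * t ^ 2 := by
      have := neg_abs_le (s * t)
      have h6 : |s * t| ^ 2 = s ^ 2 * t ^ 2 := by rw [sq_abs]; ring
      nlinarith
    nlinarith [mul_nonneg h1 (sq_nonneg t), mul_nonneg h1 h2, mul_nonneg (sq_nonneg s) h2]

lemma aux_taylor (s : ℝ) (hs : 2 ≤ s) (x y : ℝ) :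
    |x + y| ^ s ≤ |x| ^ s + s * ((x * |x| ^ (s - 2)) * y)
      + (s ^ 2 + (s + 1) ^ s) * (|x| ^ (s - 2) * y ^ 2 + |y| ^ s) := by
  have h1 : 0 ≤ (s + 1) ^ s := Real.rpow_nonneg (by linarith) _
  have h2 : 0 ≤ |y| ^ s := by positivity
  rcases eq_or_ne x 0 with rfl | hx
  · have h3 : 0 ≤ |(0:ℝ)| ^ (s - 2) * y ^ 2 := by positivity
    have h4 : 0 ≤ |(0:ℝ)| ^ s := by positivity
    simp only [zero_add, zero_mul, mul_zero, add_zero]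
    have h5 : 1 ≤ s ^ 2 := by nlinarith
    nlinarith [mul_nonneg h1 h3, mul_nonneg h1 h2, mul_nonneg (sq_nonneg s) h3,
      mul_nonneg (sub_nonneg.2 h5) h2]
  · have hx' : 0 < |x| := abs_pos.2 hx
    have key := aux_scalar s hs (y / x)
    have e1 : |x| ^ s = |x| ^ (s - 2) * x ^ 2 := by
      rw [← sq_abs x, ← Real.rpow_natCast |x| 2, ← Real.rpow_add hx']; norm_num
    have e2 : |x + y| ^ s = |x| ^ s * |1 + y / x| ^ s := by
      rw [← Real.mul_rpow (abs_nonneg _) (abs_nonneg _), ← abs_mul]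
      congr 2; field_simp
    have e3 : |y| ^ s = |x| ^ s * |y / x| ^ s := by
      rw [← Real.mul_rpow (abs_nonneg _) (abs_nonneg _), ← abs_mul]
      congr 2; field_simp
    have := mul_le_mul_of_nonneg_left key (show 0 ≤ |x| ^ s by positivity)
    rw [e2, e3]
    refine this.trans (le_of_eq ?_)
    generalize |y / x| ^ s = z
    rw [e1]
    field_simp
    
/-- constant in the moment inequality -/
noncomputable def mzC (s : ℝ) : ℝ := s ^ 2 + (s + 1) ^ s
noncomputable def mzK (s : ℝ) : ℝ := (2 * mzC s + 1) ^ (s / 2)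

lemma mzC_pos (s : ℝ) (hs : 2 ≤ s) : 1 ≤ mzC s := by
  have h1 : 0 ≤ (s + 1) ^ s := Real.rpow_nonneg (by linarith) _
  unfold mzC; nlinarith

lemma mzK_pos (s : ℝ) (hs : 2 ≤ s) : 0 < mzK s := by
  have := mzC_pos s hs
  unfold mzK; positivity

lemma aux_rec (s : ℝ) (hs : 2 ≤ s) (n : ℕ) (A A' B : ℝ) (hA : 0 ≤ A) (hB : 0 ≤ B)
    (hAn : A ≤ mzK s * (n : ℝ) ^ (s / 2) * B)
    (hA' : A' ≤ A + mzC s * (A ^ ((s - 2) / s) * B ^ (2 / s) + B)) :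
    A' ≤ mzK s * ((n + 1 : ℕ) : ℝ) ^ (s / 2) * B := by
  have hC := mzC_pos s hs
  have hK := mzK_pos s hs
  have hs0 : 0 < s := by linarith
  set C := mzC s
  set K' := (2 * C + 1) ^ ((s - 2) / 2) with hK'
  have hK'1 : 1 ≤ K' := Real.one_le_rpow (by linarith) (by linarith)
  have hKK : mzK s = (2 * C + 1) * K' := by
    rw [hK', mzK, ← Real.rpow_one_add' (by linarith) (by linarith)]; congr 1; ring
  have hn0 : (0:ℝ) ≤ n := n.cast_nonneg
  set N := ((n : ℝ) + 1) ^ ((s - 2) / 2) with hN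
  have hN1 : 1 ≤ N := Real.one_le_rpow (by linarith) (by linarith)
  have hnN : (n : ℝ) ^ ((s - 2) / 2) ≤ N := Real.rpow_le_rpow hn0 (by linarith) (by linarith)
  have e1 : A ^ ((s - 2) / s) * B ^ (2 / s) ≤ K' * N * B := by
    have : A ^ ((s - 2) / s) ≤ (mzK s * (n : ℝ) ^ (s / 2) * B) ^ ((s - 2) / s) :=
      Real.rpow_le_rpow hA hAn (div_nonneg (by linarith) hs0.le)
    have h2 : (mzK s * (n : ℝ) ^ (s / 2) * B) ^ ((s - 2) / s)
        = K' * (n : ℝ) ^ ((s - 2) / 2) * B ^ ((s - 2) / s) := by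
      rw [Real.mul_rpow (by positivity) hB, Real.mul_rpow hK.le (by positivity), mzK,
        ← Real.rpow_mul (by linarith), ← Real.rpow_mul hn0]
      have : s / 2 * ((s - 2) / s) = (s - 2) / 2 := by field_simp
      rw [this]
    have h3 : B ^ ((s - 2) / s) * B ^ (2 / s) = B := by
      have : (s - 2) / s + 2 / s = 1 := by field_simp; ring
      rw [← Real.rpow_add' hB (by rw [this]; norm_num), this, Real.rpow_one]
    calc A ^ ((s - 2) / s) * B ^ (2 / s)
        ≤ K' * (n : ℝ) ^ ((s - 2) / 2) * B ^ ((s - 2) / s) * B ^ (2 / s) := by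
          rw [← h2]; gcongr
      _ = K' * (n : ℝ) ^ ((s - 2) / 2) * B := by rw [mul_assoc, h3]
      _ ≤ _ := by gcongr
  have e2 : (n : ℝ) ^ (s / 2) ≤ n * N := by
    have : (n : ℝ) ^ (s / 2) = n * (n : ℝ) ^ ((s - 2) / 2) := by
      rw [← Real.rpow_one_add' hn0 (by linarith)]; congr 1; ring
    rw [this]; gcongr
  have e3 : ((n + 1 : ℕ) : ℝ) ^ (s / 2) = (n + 1) * N := by
    push_cast
    rw [hN, ← Real.rpow_one_add' (by linarith) (by linarith)]; congr 1; ring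
  rw [e3]
  have e4 : A ≤ mzK s * (n * N) * B := hAn.trans (by gcongr)
  have e5 : C * (A ^ ((s - 2) / s) * B ^ (2 / s) + B) ≤ C * (K' * N * B + B) := by gcongr
  have e6 : B ≤ K' * N * B := by
    have : 1 ≤ K' * N := by nlinarith
    nlinarith
  have e7 : C * (K' * N * B + B) ≤ C * (K' * N * B + K' * N * B) := by gcongr
  rw [hKK] at e4 ⊢
  have : 0 ≤ K' * N * B := by positivity
  nlinarith

lemma aux_int_pow {Ω : Type*} [MeasurableSpace Ω] {P : Measure Ω} [IsProbabilityMeasure P]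
    {Z : Ω → ℝ} (hZ : Measurable Z) {a s : ℝ} (ha : 0 ≤ a) (has : a ≤ s)
    (hi : Integrable (fun w => |Z w| ^ s) P) : Integrable (fun w => |Z w| ^ a) P := by
  refine Integrable.mono' ((integrable_const (1:ℝ)).add hi) (by fun_prop) ?_
  filter_upwards with w
  rw [Real.norm_of_nonneg (by positivity)]
  simp only [Pi.add_apply]
  rcases le_total |Z w| 1 with h | h
  · have := Real.rpow_le_one (abs_nonneg _) h ha
    have : 0 ≤ |Z w| ^ s := by positivity
    linarith
  · have := Real.rpow_le_rpow_of_exponent_le h has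
    linarith

lemma aux_jensen {Ω : Type*} [MeasurableSpace Ω] {P : Measure Ω} [IsProbabilityMeasure P]
    {Z : Ω → ℝ} (hZ : Measurable Z) {a s : ℝ} (ha : 0 ≤ a) (has : a ≤ s) (hs : 0 < s)
    (hi : Integrable (fun w => |Z w| ^ s) P) :
    ∫ w, |Z w| ^ a ∂P ≤ (∫ w, |Z w| ^ s ∂P) ^ (a / s) := by
  have e : ∀ w, |Z w| ^ a = (|Z w| ^ s) ^ (a / s) := fun w => by
    rw [← Real.rpow_mul (abs_nonneg _)]; congr 1; field_simp
  have hia := aux_int_pow hZ ha has hi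
  simp only [e] at hia ⊢
  exact (Real.concaveOn_rpow (div_nonneg ha hs.le) ((div_le_one hs).2 has)).le_map_integral
    (Real.continuous_rpow_const (div_nonneg ha hs.le)).continuousOn isClosed_Ici
    (Filter.Eventually.of_forall fun w => by simp; positivity) hi hia

lemma aux_mz {Ω ι : Type*} [MeasurableSpace Ω] {P : Measure Ω} [IsProbabilityMeasure P]
    {X : ι → Ω → ℝ} (hX : iIndepFun X P) (hm : ∀ i, Measurable (X i)) {s : ℝ} (hs : 2 ≤ s)
    (hL : ∀ i, Integrable (fun w => |X i w| ^ s) P) (h0 : ∀ i, ∫ w, X i w ∂P = 0)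
    {B : ℝ} (hB0 : 0 ≤ B) (hB : ∀ i, ∫ w, |X i w| ^ s ∂P ≤ B) (t : Finset ι) :
    Integrable (fun w => |∑ i ∈ t, X i w| ^ s) P ∧
      ∫ w, |∑ i ∈ t, X i w| ^ s ∂P ≤ mzK s * (t.card : ℝ) ^ (s / 2) * B := by
  classical
  have hs0 : 0 < s := by linarith
  induction t using Finset.induction_on with
  | empty =>
    simp [Real.zero_rpow hs0.ne', Real.zero_rpow (show s / 2 ≠ 0 by positivity)]
  | insert i t hi ih =>
    obtain ⟨ih1, ih2⟩ := ih
    set S : Ω → ℝ := fun w => ∑ i ∈ t, X i w with hS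
    have hSm : Measurable S := by fun_prop
    have hind : IndepFun S (X i) P := by
      have := hX.indepFun_finsetSum_of_notMem hm hi
      convert this using 1
      ext w; simp [hS]
    have eS : ∀ w, ∑ j ∈ insert i t, X j w = S w + X i w := fun w => by
      rw [Finset.sum_insert hi, add_comm]
    simp only [eS]
    -- integrable pieces
    have i1 : Integrable (fun w => |S w| ^ (s - 2)) P :=
      aux_int_pow hSm (by linarith) (by linarith) ih1
    have i2 : Integrable (fun w => (X i w) ^ 2) P := by
      have := aux_int_pow (hm i) (a := 2) (by norm_num) hs (hL i)
      simpa using this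
    have i3 : Integrable (X i) P := by
      have := aux_int_pow (hm i) (a := 1) (by norm_num) (by linarith) (hL i)
      simp only [Real.rpow_one] at this
      exact (integrable_norm_iff (hm i).aestronglyMeasurable).1 this
    have i4 : Integrable (fun w => S w * |S w| ^ (s - 2)) P := by
      have := aux_int_pow hSm (a := s - 1) (by linarith) (by linarith) ih1
      refine this.mono' (by fun_prop) ?_
      filter_upwards with w
      rw [norm_mul, Real.norm_eq_abs, Real.norm_of_nonneg (by positivity)]
      apply le_of_eq
      rw [← Real.rpow_one_add' (abs_nonneg _) (by linarith)]; congr 1; ring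
    have hind1 : IndepFun (fun w => |S w| ^ (s - 2)) (fun w => (X i w) ^ 2) P :=
      hind.comp (φ := fun x : ℝ => |x| ^ (s - 2)) (ψ := fun x : ℝ => x ^ 2)
        (by fun_prop) (by fun_prop)
    have hind2 : IndepFun (fun w => S w * |S w| ^ (s - 2)) (X i) P :=
      hind.comp (φ := fun x : ℝ => x * |x| ^ (s - 2)) (ψ := id) (by fun_prop) measurable_id
    have j1 : Integrable (fun w => |S w| ^ (s - 2) * (X i w) ^ 2) P := hind1.integrable_mul i1 i2
    have j2 : Integrable (fun w => (S w * |S w| ^ (s - 2)) * X i w) P :=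
      hind2.integrable_mul i4 i3
    have m1 : ∫ w, |S w| ^ (s - 2) * (X i w) ^ 2 ∂P
        = (∫ w, |S w| ^ (s - 2) ∂P) * ∫ w, (X i w) ^ 2 ∂P :=
      hind1.integral_fun_mul_eq_mul_integral i1.aestronglyMeasurable i2.aestronglyMeasurable
    have m2 : ∫ w, (S w * |S w| ^ (s - 2)) * X i w ∂P = 0 := by
      rw [hind2.integral_fun_mul_eq_mul_integral i4.aestronglyMeasurable i3.aestronglyMeasurable,
        h0, mul_zero]
    have hbd : Integrable (fun w => |S w| ^ s + s * ((S w * |S w| ^ (s - 2)) * X i w)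
        + mzC s * (|S w| ^ (s - 2) * (X i w) ^ 2 + |X i w| ^ s)) P :=
      (ih1.add (j2.const_mul s)).add ((j1.add (hL i)).const_mul _)
    have hpt : ∀ w, |S w + X i w| ^ s ≤ |S w| ^ s + s * ((S w * |S w| ^ (s - 2)) * X i w)
        + mzC s * (|S w| ^ (s - 2) * (X i w) ^ 2 + |X i w| ^ s) := fun w => aux_taylor s hs _ _
    have hint : Integrable (fun w => |S w + X i w| ^ s) P := by
      refine hbd.mono' (((hSm.add (hm i)).abs.pow_const s).aestronglyMeasurable) ?_
      filter_upwards with w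
      rw [Real.norm_of_nonneg (by positivity)]
      exact hpt w
    refine ⟨hint, ?_⟩
    rw [Finset.card_insert_of_notMem hi]
    refine aux_rec s hs t.card _ _ B (integral_nonneg fun w => by positivity) hB0 ih2 ?_
    refine (integral_mono hint hbd hpt).trans ?_
    have hsplit : ∫ w, (|S w| ^ s + s * ((S w * |S w| ^ (s - 2)) * X i w)
        + mzC s * (|S w| ^ (s - 2) * (X i w) ^ 2 + |X i w| ^ s)) ∂P
        = ∫ w, |S w| ^ s ∂P + mzC s * ((∫ w, |S w| ^ (s - 2) ∂P) * ∫ w, (X i w) ^ 2 ∂P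
          + ∫ w, |X i w| ^ s ∂P) := by
      have l1 : Integrable (fun w => |S w| ^ s + s * ((S w * |S w| ^ (s - 2)) * X i w)) P :=
        ih1.add (j2.const_mul s)
      have l2 : Integrable (fun w => mzC s * (|S w| ^ (s - 2) * (X i w) ^ 2 + |X i w| ^ s)) P :=
        (j1.add (hL i)).const_mul _
      rw [integral_add l1 l2, integral_add ih1 (j2.const_mul s), integral_const_mul,
        integral_const_mul, integral_add j1 (hL i), m1, m2, mul_zero, add_zero]
    rw [hsplit]
    have k1 := aux_jensen hSm (a := s - 2) (by linarith) (by linarith) hs0 ih1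
    have k2 : ∫ w, (X i w) ^ 2 ∂P ≤ B ^ (2 / s) := by
      have := aux_jensen (hm i) (a := 2) (by norm_num) hs hs0 (hL i)
      simp only [Real.rpow_two, sq_abs] at this
      refine this.trans (Real.rpow_le_rpow (integral_nonneg fun w => by positivity) (hB i)
        (by positivity))
    have hC := mzC_pos s hs
    have k3 : 0 ≤ ∫ w, (X i w) ^ 2 ∂P := integral_nonneg fun w => by positivity
    have k4 : 0 ≤ ∫ w, |S w| ^ s ∂P := integral_nonneg fun w => by positivity
    gcongr
    exact hB i

/-- antithetic difference -/
noncomputable def dl (a b : ℝ) : ℝ :=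
  Real.log ((a + b) / 2) - (1 / 2) * (Real.log a + Real.log b)

lemma dl_nonneg {a b : ℝ} (ha : 0 < a) (hb : 0 < b) : 0 ≤ dl a b := by
  have h : Real.log (a * b) ≤ Real.log (((a + b) / 2) ^ 2) :=
    Real.log_le_log (by positivity) (by nlinarith [sq_nonneg (a - b)])
  rw [Real.log_mul ha.ne' hb.ne', Real.log_pow] at h
  push_cast at h
  unfold dl; linarith

lemma dl_le_max {a b : ℝ} (ha : 0 < a) (hb : 0 < b) :
    dl a b ≤ max |Real.log a| |Real.log b| := by
  unfold dl
  have h1 := neg_abs_le (Real.log a)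
  have h2 := neg_abs_le (Real.log b)
  have h3 := le_abs_self (Real.log a)
  have h4 := le_abs_self (Real.log b)
  rcases le_total a b with h | h
  · have : Real.log ((a + b) / 2) ≤ Real.log b := Real.log_le_log (by positivity) (by linarith)
    have := le_max_left |Real.log a| |Real.log b|
    have := le_max_right |Real.log a| |Real.log b|
    linarith
  · have : Real.log ((a + b) / 2) ≤ Real.log a := Real.log_le_log (by positivity) (by linarith)
    have := le_max_left |Real.log a| |Real.log b|
    have := le_max_right |Real.log a| |Real.log b|
    linarith

lemma dl_le_sq {a b : ℝ} (ha : 1 / 2 ≤ a) (hb : 1 / 2 ≤ b) : dl a b ≤ (a - b) ^ 2 / 2 := by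
  have ha0 : 0 < a := by linarith
  have hb0 : 0 < b := by linarith
  have h := Real.log_le_sub_one_of_pos (show 0 < ((a + b) / 2) ^ 2 / (a * b) by positivity)
  rw [Real.log_div (by positivity) (by positivity), Real.log_mul ha0.ne' hb0.ne',
    Real.log_pow] at h
  push_cast at h
  have e : ((a + b) / 2) ^ 2 / (a * b) - 1 = (a - b) ^ 2 / (4 * (a * b)) := by field_simp; ring
  rw [e] at h
  have : (a - b) ^ 2 / (4 * (a * b)) ≤ (a - b) ^ 2 / 1 := by
    apply div_le_div_of_nonneg_left (sq_nonneg _) one_pos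
    nlinarith
  unfold dl; linarith

lemma dl_main {a b t : ℝ} (ha : 0 < a) (hb : 0 < b) (ht0 : 0 ≤ t) (ht : t ≤ 4) :
    dl a b ^ 2 ≤ (4 + 16 * dl a b ^ 2) * (max |a - 1| |b - 1|) ^ t := by
  set W := max |a - 1| |b - 1| with hW
  have h1 : |a - 1| ≤ W := le_max_left _ _
  have h2 : |b - 1| ≤ W := le_max_right _ _
  have hW0 : 0 ≤ W := (abs_nonneg _).trans h1
  have hWt : 0 ≤ W ^ t := by positivity
  have hd := dl_nonneg ha hb
  rcases le_or_gt W (1 / 2) with h | h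
  · have h1' := abs_le.1 h1
    have h2' := abs_le.1 h2
    have h3 := dl_le_sq (a := a) (b := b) (by linarith) (by linarith)
    have h4 : dl a b ≤ 2 * W ^ 2 := by nlinarith
    have h5 : dl a b ^ 2 ≤ 4 * W ^ 4 := by nlinarith [sq_nonneg W]
    have h6 : W ^ 4 ≤ W ^ t := by
      rcases hW0.eq_or_lt with h0 | h0
      · rw [← h0, zero_pow (by norm_num)]; positivity
      · rw [← Real.rpow_natCast]
        exact Real.rpow_le_rpow_of_exponent_ge h0 (by linarith) (by exact_mod_cast ht)
    nlinarith [mul_nonneg (sq_nonneg (dl a b)) hWt]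
  · have h3 : 1 ≤ (2 * W) ^ t := Real.one_le_rpow (by linarith) ht0
    rw [Real.mul_rpow (by norm_num) hW0] at h3
    have h4 : (2:ℝ) ^ t ≤ 16 := by
      calc (2:ℝ) ^ t ≤ 2 ^ (4:ℝ) := Real.rpow_le_rpow_of_exponent_le (by norm_num) ht
        _ = 16 := by norm_num
    have h5 : 1 ≤ 16 * W ^ t := h3.trans (by gcongr)
    nlinarith [mul_le_mul_of_nonneg_left h5 (sq_nonneg (dl a b))]

lemma log_pow_le {q a : ℝ} (hq : 0 < q) (ha : 1 ≤ a) : |Real.log a| ^ q ≤ q ^ q * a := by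
  have h0 := Real.log_nonneg ha
  have h1 : Real.log a ≤ a ^ (1 / q) / (1 / q) := Real.log_le_rpow_div (by linarith) (by positivity)
  rw [abs_of_nonneg h0]
  calc Real.log a ^ q ≤ (a ^ (1 / q) / (1 / q)) ^ q := Real.rpow_le_rpow h0 h1 hq.le
    _ = (q * a ^ (1 / q)) ^ q := by congr 1; field_simp
    _ = q ^ q * a := by
      rw [Real.mul_rpow hq.le (by positivity), ← Real.rpow_mul (by linarith)]
      rw [one_div_mul_cancel hq.ne', Real.rpow_one]

lemma log_mean_le {ι : Type*} (A : Finset ι) {m : ℕ} (hm : 1 ≤ m) (hA : A.card = m) (y : ι → ℝ)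
    (hy : ∀ i, 0 < y i) {q : ℝ} (hq : 1 ≤ q) :
    |Real.log ((∑ i ∈ A, y i) / m)| ^ q
      ≤ q ^ q * ((∑ i ∈ A, y i) / m) + (∑ i ∈ A, |Real.log (y i)| ^ q) / m := by
  have hm0 : (0:ℝ) < m := by exact_mod_cast hm
  have hne : A.Nonempty := by rw [← Finset.card_pos]; omega
  have hs : 0 < ∑ i ∈ A, y i := Finset.sum_pos (fun i _ => hy i) hne
  have hw : ∑ i ∈ A, (1 / (m:ℝ)) = 1 := by simp [hA]; field_simp
  have hr : 0 ≤ (∑ i ∈ A, |Real.log (y i)| ^ q) / m :=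
    div_nonneg (Finset.sum_nonneg fun i _ => by positivity) hm0.le
  have hqq : 0 ≤ q ^ q := by positivity
  rcases le_or_gt 1 ((∑ i ∈ A, y i) / m) with h | h
  · have := log_pow_le (q := q) (by linarith) h
    linarith
  · have hpos : 0 < (∑ i ∈ A, y i) / m := by positivity
    have h1 : ∑ i ∈ A, (1 / (m:ℝ)) * Real.log (y i) ≤ Real.log (∑ i ∈ A, (1 / (m:ℝ)) * y i) := by
      have := strictConcaveOn_log_Ioi.concaveOn.le_map_sum (t := A) (w := fun _ => 1 / (m:ℝ))
        (p := y) (fun i _ => by positivity) hw (fun i _ => hy i)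
      simpa [smul_eq_mul] using this
    have e1 : ∑ i ∈ A, (1 / (m:ℝ)) * y i = (∑ i ∈ A, y i) / m := by
      rw [← Finset.mul_sum]; ring
    rw [e1] at h1
    have h2 : |Real.log ((∑ i ∈ A, y i) / m)| ≤ ∑ i ∈ A, (1 / (m:ℝ)) * |Real.log (y i)| := by
      rw [abs_of_nonpos (Real.log_nonpos hpos.le h.le)]
      refine (neg_le_neg h1).trans ?_
      rw [← Finset.sum_neg_distrib]
      refine Finset.sum_le_sum fun i _ => ?_
      have := mul_le_mul_of_nonneg_left (neg_abs_le (Real.log (y i)))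
        (show 0 ≤ 1 / (m:ℝ) by positivity)
      linarith
    have h3 := Real.rpow_arith_mean_le_arith_mean_rpow A (fun _ => 1 / (m:ℝ))
      (fun i => |Real.log (y i)|) (fun i _ => by positivity) hw (fun i _ => abs_nonneg _) hq
    have h4 := (Real.rpow_le_rpow (abs_nonneg _) h2 (by linarith)).trans h3
    rw [← Finset.mul_sum] at h4
    have : 0 ≤ q ^ q * ((∑ i ∈ A, y i) / m) := by positivity
    calc _ ≤ _ := h4
      _ = (∑ i ∈ A, |Real.log (y i)| ^ q) / m := by ring
      _ ≤ _ := by linarith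

lemma dl_U {a b q : ℝ} (ha : 0 < a) (hb : 0 < b) (hq : 2 < q) :
    (4 + 16 * dl a b ^ 2) ^ (q / 2)
      ≤ 20 ^ (q / 2) * (1 + (|Real.log a| ^ q + |Real.log b| ^ q)) := by
  have hd := dl_nonneg ha hb
  have h1 : dl a b ^ q ≤ |Real.log a| ^ q + |Real.log b| ^ q := by
    have h := dl_le_max ha hb
    have := Real.rpow_le_rpow hd h (show 0 ≤ q by linarith)
    have p1 : 0 ≤ |Real.log a| ^ q := by positivity
    have p2 : 0 ≤ |Real.log b| ^ q := by positivity
    rcases max_cases |Real.log a| |Real.log b| with ⟨e, _⟩ | ⟨e, _⟩ <;> rw [e] at this <;> linarith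
  have p0 : 0 ≤ dl a b ^ q := by positivity
  have h20 : (0:ℝ) ≤ 20 ^ (q / 2) := by positivity
  refine le_trans ?_ (mul_le_mul_of_nonneg_left (show 1 + dl a b ^ q ≤ _ by linarith) h20)
  rcases le_total (dl a b) 1 with h | h
  · calc (4 + 16 * dl a b ^ 2) ^ (q / 2) ≤ 20 ^ (q / 2) :=
        Real.rpow_le_rpow (by positivity) (by nlinarith) (by linarith)
      _ ≤ _ := by nlinarith
  · calc (4 + 16 * dl a b ^ 2) ^ (q / 2) ≤ (20 * dl a b ^ 2) ^ (q / 2) :=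
        Real.rpow_le_rpow (by positivity) (by nlinarith) (by linarith)
      _ = 20 ^ (q / 2) * dl a b ^ q := by
        rw [Real.mul_rpow (by norm_num) (by positivity), ← Real.rpow_natCast (dl a b) 2,
          ← Real.rpow_mul hd]
        congr 2; push_cast; ring
      _ ≤ _ := by nlinarith

lemma lint_mean {𝒳 ι : Type*} [MeasurableSpace 𝒳] [Fintype ι] (P : Measure 𝒳)
    [IsProbabilityMeasure P] (F : 𝒳 → ℝ) (hF : Measurable F) (hF0 : ∀ x, 0 ≤ F x)
    (A : Finset ι) {m : ℕ} (hm : 1 ≤ m) (hA : A.card = m) :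
    ∫⁻ x : ι → 𝒳, ENNReal.ofReal ((∑ i ∈ A, F (x i)) / m) ∂(Measure.pi fun _ => P)
      = ∫⁻ y, ENNReal.ofReal (F y) ∂P := by
  have hm0 : (0:ℝ) < m := by exact_mod_cast hm
  have e : ∀ x : ι → 𝒳, ENNReal.ofReal ((∑ i ∈ A, F (x i)) / m)
      = ENNReal.ofReal ((m:ℝ)⁻¹) * ∑ i ∈ A, ENNReal.ofReal (F (x i)) := fun x => by
    rw [← ENNReal.ofReal_sum_of_nonneg (fun i _ => hF0 _), ← ENNReal.ofReal_mul (by positivity)]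
    congr 1; field_simp
  simp only [e]
  rw [lintegral_const_mul _ (by fun_prop), lintegral_finsetSum _ (fun i _ => by fun_prop)]
  have e2 : ∀ i ∈ A, ∫⁻ x : ι → 𝒳, ENNReal.ofReal (F (x i)) ∂(Measure.pi fun _ => P)
      = ∫⁻ y, ENNReal.ofReal (F y) ∂P := fun i _ =>
    (measurePreserving_eval (fun _ : ι => P) i).lintegral_comp
      (f := fun y => ENNReal.ofReal (F y)) (by fun_prop)
  rw [Finset.sum_congr rfl e2, Finset.sum_const, hA, nsmul_eq_mul, ← mul_assoc,
    ← ENNReal.ofReal_natCast m, ← ENNReal.ofReal_mul (by positivity), inv_mul_cancel₀ hm0.ne']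
  simp

lemma lint_dev {𝒳 ι : Type*} [MeasurableSpace 𝒳] [Fintype ι] (P : Measure 𝒳)
    [IsProbabilityMeasure P] (Y : 𝒳 → ℝ) (hY : Measurable Y) (hint : Integrable Y P)
    (h1 : ∫ y, Y y ∂P = 1) {s : ℝ} (hs : 2 ≤ s)
    (hL : Integrable (fun y => |Y y - 1| ^ s) P)
    (A : Finset ι) {m : ℕ} (hm : 1 ≤ m) (hA : A.card = m) :
    ∫⁻ x : ι → 𝒳, ENNReal.ofReal (|(∑ i ∈ A, Y (x i)) / m - 1| ^ s) ∂(Measure.pi fun _ => P)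
      ≤ ENNReal.ofReal (mzK s * (m : ℝ) ^ (-(s / 2))) * ∫⁻ y, ENNReal.ofReal (|Y y - 1| ^ s) ∂P := by
  have hm0 : (0:ℝ) < m := by exact_mod_cast hm
  have hmp := fun i => measurePreserving_eval (fun _ : ι => P) i
  have key := aux_mz (P := Measure.pi fun _ : ι => P) (X := fun i x => Y (x i) - 1)
    (iIndepFun_pi (X := fun _ y => Y y - 1) (fun i => by fun_prop)) (fun i => by fun_prop) hs
    (fun i => (hmp i).integrable_comp_of_integrable hL)
    (fun i => by
      have := integral_comp_eval (μ := fun _ : ι => P) (i := i) (f := fun y => Y y - 1)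
        (by fun_prop)
      rw [this, integral_sub hint (integrable_const _), h1]; simp)
    (B := ∫ y, |Y y - 1| ^ s ∂P) (integral_nonneg fun _ => by positivity)
    (fun i => le_of_eq (integral_comp_eval (μ := fun _ : ι => P) (i := i)
      (f := fun y => |Y y - 1| ^ s) hL.aestronglyMeasurable)) A
  obtain ⟨k1, k2⟩ := key
  rw [hA] at k2
  have e : ∀ x : ι → 𝒳, |(∑ i ∈ A, Y (x i)) / m - 1| ^ s
      = (m:ℝ) ^ (-s) * |∑ i ∈ A, (Y (x i) - 1)| ^ s := fun x => by
    have : (∑ i ∈ A, Y (x i)) / m - 1 = (m:ℝ)⁻¹ * ∑ i ∈ A, (Y (x i) - 1) := by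
      rw [Finset.sum_sub_distrib]; simp [hA]; field_simp
    rw [this, abs_mul, Real.mul_rpow (abs_nonneg _) (abs_nonneg _), abs_of_pos (by positivity),
      Real.inv_rpow hm0.le, Real.rpow_neg hm0.le]
  simp only [e]
  rw [← ofReal_integral_eq_lintegral_ofReal (k1.const_mul _)
      (Filter.Eventually.of_forall fun x => by positivity),
    ← ofReal_integral_eq_lintegral_ofReal hL (Filter.Eventually.of_forall fun x => by positivity),
    ← ENNReal.ofReal_mul (mul_nonneg (mzK_pos s hs).le (by positivity)), integral_const_mul]
  apply ENNReal.ofReal_le_ofReal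
  have : (m:ℝ) ^ (-(s/2)) = (m:ℝ) ^ (-s) * (m:ℝ) ^ (s/2) := by
    rw [← Real.rpow_add hm0]; congr 1; ring
  rw [this]
  calc _ ≤ (m:ℝ) ^ (-s) * (mzK s * (m:ℝ) ^ (s / 2) * ∫ y, |Y y - 1| ^ s ∂P) := by gcongr
    _ = _ := by ring

lemma core {𝒳 ι : Type*} [MeasurableSpace 𝒳] [Fintype ι] (P : Measure 𝒳)
    [IsProbabilityMeasure P] (Y : 𝒳 → ℝ) (hY : Measurable Y) (hpos : ∀ᵐ y ∂P, 0 < Y y)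
    (hint : Integrable Y P)
    (h1 : ∫ y, Y y ∂P = 1) {s q : ℝ} (hs : 2 ≤ s) (hq : 2 < q) (hsq : s * (q - 2) / q ≤ 4)
    (hL : Integrable (fun y => |Y y - 1| ^ s) P) (γ : ℝ) (hγ : 0 ≤ γ)
    (A B : Finset ι) {m : ℕ} (hm : 1 ≤ m) (hA : A.card = m) (hB : B.card = m) :
    ∫⁻ x : ι → 𝒳, ENNReal.ofReal
        (dl ((∑ i ∈ A, Y (x i)) / m) ((∑ i ∈ B, Y (x i)) / m) ^ 2 * γ ^ 2)
          ∂(Measure.pi fun _ => P)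
      ≤ (ENNReal.ofReal (20 ^ (q / 2) * (2 + 2 * q ^ q)) *
          ∫⁻ y, ENNReal.ofReal ((1 + |Real.log (Y y)| ^ q) * γ ^ q) ∂P) ^ (2 / q) *
        (ENNReal.ofReal (2 * mzK s * (m : ℝ) ^ (-(s / 2))) *
          ∫⁻ y, ENNReal.ofReal (|Y y - 1| ^ s) ∂P) ^ ((q - 2) / q) := by
  have hm0 : (0:ℝ) < m := by exact_mod_cast hm
  have hq0 : 0 < q := by linarith
  have hq2 : 0 < q - 2 := by linarith
  have hae : ∀ᵐ x ∂(Measure.pi fun _ : ι => P), ∀ i, 0 < Y (x i) := by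
    rw [ae_all_iff]
    intro i
    exact (measurePreserving_eval (fun _ : ι => P) i).quasiMeasurePreserving.ae hpos
  set a : (ι → 𝒳) → ℝ := fun x => (∑ i ∈ A, Y (x i)) / m with ha
  set b : (ι → 𝒳) → ℝ := fun x => (∑ i ∈ B, Y (x i)) / m with hb
  have ham : Measurable a := by fun_prop
  have hbm : Measurable b := by fun_prop
  have hAne : A.Nonempty := by rw [← Finset.card_pos]; omega
  have hBne : B.Nonempty := by rw [← Finset.card_pos]; omega
  have hpa : ∀ x : ι → 𝒳, (∀ i, 0 < Y (x i)) → 0 < a x := fun x hx =>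
    div_pos (Finset.sum_pos (fun i _ => hx i) hAne) hm0
  have hpb : ∀ x : ι → 𝒳, (∀ i, 0 < Y (x i)) → 0 < b x := fun x hx =>
    div_pos (Finset.sum_pos (fun i _ => hx i) hBne) hm0
  set t := s * (q - 2) / q with ht
  have ht0 : 0 ≤ t := by positivity
  set W : (ι → 𝒳) → ℝ := fun x => max |a x - 1| |b x - 1| with hW
  have hWm : Measurable W := (by fun_prop : Measurable fun x => |a x - 1|).max
    (by fun_prop : Measurable fun x => |b x - 1|)
  have hW0 : ∀ x, 0 ≤ W x := fun x => (abs_nonneg _).trans (le_max_left _ _)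
  have hdm : Measurable fun x => dl (a x) (b x) := by unfold dl; fun_prop
  set U : (ι → 𝒳) → ℝ := fun x => (4 + 16 * dl (a x) (b x) ^ 2) * γ ^ 2 with hU
  have hUm : Measurable U := by fun_prop
  have hU0 : ∀ x, 0 ≤ U x := fun x => by positivity
  have hconj : (q / 2).HolderConjugate (q / (q - 2)) := by
    rw [Real.holderConjugate_iff]
    refine ⟨by linarith, ?_⟩
    field_simp; ring
  have step1 : ∫⁻ x : ι → 𝒳, ENNReal.ofReal (dl (a x) (b x) ^ 2 * γ ^ 2) ∂(Measure.pi fun _ => P)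
      ≤ ∫⁻ x : ι → 𝒳, ((fun x => ENNReal.ofReal (U x)) * (fun x => ENNReal.ofReal (W x ^ t))) x
        ∂(Measure.pi fun _ => P) := by
    apply lintegral_mono_ae
    filter_upwards [hae] with x hx
    simp only [Pi.mul_apply]
    rw [← ENNReal.ofReal_mul (hU0 x)]
    apply ENNReal.ofReal_le_ofReal
    have := mul_le_mul_of_nonneg_right (dl_main (hpa x hx) (hpb x hx) ht0 hsq) (sq_nonneg γ)
    refine this.trans (le_of_eq ?_)
    simp only [hU, hW]; ring
  refine step1.trans ((ENNReal.lintegral_mul_le_Lp_mul_Lq _ hconj (by fun_prop)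
    (by fun_prop)).trans ?_)
  have ex1 : 1 / (q / 2) = 2 / q := by field_simp
  have ex2 : 1 / (q / (q - 2)) = (q - 2) / q := by field_simp
  rw [ex1, ex2]
  refine mul_le_mul' (ENNReal.rpow_le_rpow ?_ (by positivity))
    (ENNReal.rpow_le_rpow ?_ (by positivity))
  · set F : 𝒳 → ℝ := fun y => q ^ q * |Y y| + |Real.log (Y y)| ^ q with hF
    have hFm : Measurable F := by fun_prop
    have hF0 : ∀ y, 0 ≤ F y := fun y => by positivity
    have hmean : ∀ D : Finset ι, D.card = m → ∀ x : ι → 𝒳, (∀ i, 0 < Y (x i)) →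
        |Real.log ((∑ i ∈ D, Y (x i)) / m)| ^ q ≤ (∑ i ∈ D, F (x i)) / m := by
      intro D hD x hx
      refine (log_mean_le D hm hD (fun i => Y (x i)) hx (by linarith)).trans (le_of_eq ?_)
      simp only [hF, Finset.sum_add_distrib, ← Finset.mul_sum, abs_of_pos (hx _)]
      ring
    have hm20 : (0:ℝ) ≤ 20 ^ (q / 2) := by positivity
    have hγq : 0 ≤ γ ^ q := by positivity
    have hS0 : ∀ (D : Finset ι) (x : ι → 𝒳), 0 ≤ (∑ i ∈ D, F (x i)) / m := fun D x =>
      div_nonneg (Finset.sum_nonneg fun i _ => hF0 _) hm0.le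
    have step2 : ∫⁻ x : ι → 𝒳, ENNReal.ofReal (U x) ^ (q / 2) ∂(Measure.pi fun _ => P)
        ≤ ∫⁻ x : ι → 𝒳, ENNReal.ofReal (20 ^ (q / 2) * γ ^ q) *
          (1 + (ENNReal.ofReal ((∑ i ∈ A, F (x i)) / m) +
            ENNReal.ofReal ((∑ i ∈ B, F (x i)) / m))) ∂(Measure.pi fun _ => P) := by
      apply lintegral_mono_ae
      filter_upwards [hae] with x hx
      rw [ENNReal.ofReal_rpow_of_nonneg (hU0 x) (by positivity), ← ENNReal.ofReal_one,
        ← ENNReal.ofReal_add (hS0 _ _) (hS0 _ _),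
        ← ENNReal.ofReal_add zero_le_one (add_nonneg (hS0 _ _) (hS0 _ _)),
        ← ENNReal.ofReal_mul (by positivity)]
      apply ENNReal.ofReal_le_ofReal
      have d1 := dl_U (hpa x hx) (hpb x hx) hq
      have d2 := hmean A hA x hx
      have d3 := hmean B hB x hx
      have d4 : U x ^ (q / 2) = (4 + 16 * dl (a x) (b x) ^ 2) ^ (q / 2) * γ ^ q := by
        simp only [hU]
        rw [Real.mul_rpow (by positivity) (by positivity), ← Real.rpow_natCast γ 2,
          ← Real.rpow_mul hγ]
        congr 2; push_cast; ring
      rw [d4]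
      calc _ ≤ 20 ^ (q / 2) * (1 + (|Real.log (a x)| ^ q + |Real.log (b x)| ^ q)) * γ ^ q := by
            gcongr
        _ ≤ 20 ^ (q / 2) * (1 + ((∑ i ∈ A, F (x i)) / m + (∑ i ∈ B, F (x i)) / m)) * γ ^ q := by
            gcongr
        _ = _ := by ring
    refine step2.trans ?_
    rw [lintegral_const_mul _ (by fun_prop), lintegral_add_left (by fun_prop),
      lintegral_add_left (by fun_prop), lint_mean P F hFm hF0 A hm hA,
      lint_mean P F hFm hF0 B hm hB]
    have hYi : ∫⁻ y, ENNReal.ofReal (q ^ q * |Y y|) ∂P = ENNReal.ofReal (q ^ q) := by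
      rw [← ofReal_integral_eq_lintegral_ofReal (hint.abs.const_mul _)
        (Filter.Eventually.of_forall fun x => by positivity), integral_const_mul]
      have : ∫ y, |Y y| ∂P = 1 := by
        rw [← h1]
        apply integral_congr_ae
        filter_upwards [hpos] with y hy using abs_of_pos hy
      rw [this, mul_one]
    have hFi : ∫⁻ y, ENNReal.ofReal (F y) ∂P
        = ENNReal.ofReal (q ^ q) + ∫⁻ y, ENNReal.ofReal (|Real.log (Y y)| ^ q) ∂P := by
      rw [← hYi, ← lintegral_add_left (by fun_prop)]
      apply lintegral_congr
      intro y
      rw [← ENNReal.ofReal_add (by positivity) (by positivity)]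
    have hR : ∫⁻ y, ENNReal.ofReal ((1 + |Real.log (Y y)| ^ q) * γ ^ q) ∂P
        = ENNReal.ofReal (γ ^ q) * (1 + ∫⁻ y, ENNReal.ofReal (|Real.log (Y y)| ^ q) ∂P) := by
      have : (1 : ENNReal) = ∫⁻ y, 1 ∂P := by simp
      rw [this, ← lintegral_add_left (by fun_prop), ← lintegral_const_mul _ (by fun_prop)]
      apply lintegral_congr
      intro y
      rw [← ENNReal.ofReal_one, ← ENNReal.ofReal_add (by positivity) (by positivity),
        ← ENNReal.ofReal_mul (by positivity), mul_comm]
    rw [hFi, hR]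
    set L := ∫⁻ y, ENNReal.ofReal (|Real.log (Y y)| ^ q) ∂P
    have hc : ENNReal.ofReal (20 ^ (q / 2) * (2 + 2 * q ^ q))
        = ENNReal.ofReal (20 ^ (q / 2)) * (2 + 2 * ENNReal.ofReal (q ^ q)) := by
      rw [ENNReal.ofReal_mul (by positivity), ENNReal.ofReal_add (by positivity) (by positivity),
        ENNReal.ofReal_mul (by positivity)]
      simp
    rw [hc, ENNReal.ofReal_mul (by positivity)]
    simp only [lintegral_const, measure_univ, mul_one]
    set Q := ENNReal.ofReal (q ^ q)
    calc _ ≤ ENNReal.ofReal (20 ^ (q / 2)) * ENNReal.ofReal (γ ^ q) *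
          ((1 + (Q + L + (Q + L))) + (1 + 2 * Q * L)) := mul_le_mul' le_rfl le_self_add
      _ = _ := by ring
  · have hpt : ∀ x, ENNReal.ofReal (W x ^ t) ^ (q / (q - 2))
        ≤ ENNReal.ofReal (|a x - 1| ^ s) + ENNReal.ofReal (|b x - 1| ^ s) := by
      intro x
      have hw := hW0 x
      rw [ENNReal.ofReal_rpow_of_nonneg (by positivity) (by positivity),
        ← ENNReal.ofReal_add (by positivity) (by positivity), ← Real.rpow_mul hw]
      apply ENNReal.ofReal_le_ofReal
      have : t * (q / (q - 2)) = s := by rw [ht]; field_simp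
      rw [this]
      have p1 : 0 ≤ |a x - 1| ^ s := by positivity
      have p2 : 0 ≤ |b x - 1| ^ s := by positivity
      simp only [hW]
      rcases max_cases |a x - 1| |b x - 1| with ⟨e, _⟩ | ⟨e, _⟩ <;> rw [e] <;> linarith
    refine (lintegral_mono hpt).trans ?_
    rw [lintegral_add_left (by fun_prop)]
    refine (add_le_add (lint_dev P Y hY hint h1 hs hL A hm hA)
      (lint_dev P Y hY hint h1 hs hL B hm hB)).trans (le_of_eq ?_)
    rw [mul_assoc 2, ENNReal.ofReal_mul (by norm_num : (0:ℝ) ≤ 2)]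
    simp only [ENNReal.ofReal_ofNat]
    ring

/-- MC convergence rate of the antithetic MLMC correction for the
score-function gradient: if `f > 0` a.s. and the moment conditions
`E[|f(x)/μ(θ)|^p] < ∞` and `E[(1 + |log(f(x)/μ(θ))|^q)·g(θ)^q] < ∞` hold for
some `p, q > 2` with `(p−2)(q−2) > 4`, where `(θ, x) ∼ ν ⊗ₘ κ` and
`μ(θ) = ∫ f dκ(θ)`, then `E[Δψ_{θ,ℓ}²·g(θ)²] = O(2^{−rℓ})` with
`r = min(p(q−2)/(2q), 2)`.  Here, with `M_ℓ = M₀·2^ℓ` and iid inner samples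
`x_1, …, x_{M_ℓ} ∼ κ(θ)` (modeled by the product measure), the antithetic
correction is
`Δψ_{θ,ℓ} = log((1/M_ℓ)Σ_{i<M_ℓ} f(x_i))
  − (1/2)[log((1/M_{ℓ−1})Σ_{i<M_{ℓ−1}} f(x_i))
        + log((1/M_{ℓ−1})Σ_{M_{ℓ−1}≤i<M_ℓ} f(x_i))]`. -/
theorem stmt_1 {Θ 𝒳 : Type*} [MeasurableSpace Θ] [MeasurableSpace 𝒳]
    (ν : Measure Θ) [IsProbabilityMeasure ν]
    (κ : ProbabilityTheory.Kernel Θ 𝒳) [IsMarkovKernel κ]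
    (f : 𝒳 → ℝ) (hf_meas : Measurable f)
    (g : Θ → ℝ) (hg_meas : Measurable g) (hg_nonneg : ∀ θ, 0 ≤ g θ)
    (M₀ : ℕ) (hM₀ : 1 ≤ M₀)
    (hf_pos : ∀ᵐ z ∂(ν ⊗ₘ κ), 0 < f z.2)
    (hμ : ∀ᵐ θ ∂ν, Integrable f (κ θ) ∧ 0 < ∫ x, f x ∂(κ θ))
    (p q : ℝ) (hp : 2 < p) (hq : 2 < q) (hpq : 4 < (p - 2) * (q - 2))
    (hmom1 : Integrable
      (fun z : Θ × 𝒳 => |f z.2 / ∫ x, f x ∂(κ z.1)| ^ p) (ν ⊗ₘ κ))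
    (hmom2 : Integrable
      (fun z : Θ × 𝒳 =>
        (1 + |Real.log (f z.2 / ∫ x, f x ∂(κ z.1))| ^ q) * g z.1 ^ q)
      (ν ⊗ₘ κ)) :
    ∃ C : ℝ, 0 < C ∧ ∀ ℓ : ℕ, 1 ≤ ℓ →
      ∫⁻ θ, ∫⁻ x : Fin (M₀ * 2 ^ ℓ) → 𝒳,
          ENNReal.ofReal
            ((Real.log ((∑ i, f (x i)) / (M₀ * 2 ^ ℓ : ℕ))
              - (1 / 2) *
                (Real.log
                    ((∑ i ∈ Finset.univ.filter
                        (fun i : Fin (M₀ * 2 ^ ℓ) => (i : ℕ) < M₀ * 2 ^ (ℓ - 1)),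
                      f (x i)) / (M₀ * 2 ^ (ℓ - 1) : ℕ))
                  + Real.log
                    ((∑ i ∈ Finset.univ.filter
                        (fun i : Fin (M₀ * 2 ^ ℓ) => ¬ (i : ℕ) < M₀ * 2 ^ (ℓ - 1)),
                      f (x i)) / (M₀ * 2 ^ (ℓ - 1) : ℕ)))) ^ 2
              * g θ ^ 2)
        ∂(Measure.pi fun _ => κ θ) ∂ν
      ≤ ENNReal.ofReal
          (C * (2 : ℝ) ^ (-(min (p * (q - 2) / (2 * q)) 2) * ℓ)) := by
  have hq0 : 0 < q := by linarith
  have hq2 : 0 < q - 2 := by linarith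
  set μ : Θ → ℝ := fun θ => ∫ x, f x ∂(κ θ) with hμdef
  have hμm : Measurable μ := (hf_meas.stronglyMeasurable.integral_kernel (κ := κ)).measurable
  set s := min p (4 * q / (q - 2)) with hsdef
  have hs4 : 4 ≤ 4 * q / (q - 2) := by rw [le_div_iff₀ hq2]; linarith
  have hs : 2 ≤ s := le_min hp.le (by linarith)
  have hsp : s ≤ p := min_le_left _ _
  have hsq : s * (q - 2) / q ≤ 4 := by
    have h : s ≤ 4 * q / (q - 2) := min_le_right _ _
    rw [le_div_iff₀ hq2] at h
    rwa [div_le_iff₀ hq0]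
  set r := min (p * (q - 2) / (2 * q)) 2 with hr
  have hrs : s / 2 * ((q - 2) / q) = r := by
    have hc : 0 ≤ (q - 2) / (2 * q) := by positivity
    have e1 : s / 2 * ((q - 2) / q) = s * ((q - 2) / (2 * q)) := by field_simp
    rw [e1, hsdef, min_mul_of_nonneg _ _ hc, hr]
    congr 1
    · ring
    · field_simp; norm_num
  have hr0 : 0 ≤ r := by rw [← hrs]; positivity
  have hYm : Measurable fun z : Θ × 𝒳 => f z.2 / μ z.1 := by fun_prop
  -- moment of Y - 1
  have hI : Integrable (fun z : Θ × 𝒳 => |f z.2 / μ z.1 - 1| ^ s) (ν ⊗ₘ κ) := by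
    refine aux_int_pow (hYm.sub_const 1) (by linarith) hsp ?_
    refine Integrable.mono' ((hmom1.add (integrable_const (1:ℝ))).const_mul ((2:ℝ) ^ p))
      (((hYm.sub_const 1).abs.pow_const p).aestronglyMeasurable) ?_
    filter_upwards with z
    rw [Real.norm_of_nonneg (by positivity)]
    simp only [Pi.add_apply]
    set y := f z.2 / μ z.1
    change _ ≤ 2 ^ p * (|y| ^ p + 1)
    have h1 : |y - 1| ≤ 2 * max |y| 1 := by
      have := abs_sub y 1
      rw [abs_one] at this
      linarith [le_max_left |y| 1, le_max_right |y| 1]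
    have h0 : 0 ≤ |y| ^ p := by positivity
    have hmx : 0 ≤ max |y| 1 := zero_le_one.trans (le_max_right _ _)
    calc |y - 1| ^ p ≤ (2 * max |y| 1) ^ p := Real.rpow_le_rpow (abs_nonneg _) h1 (by linarith)
      _ = 2 ^ p * (max |y| 1) ^ p := Real.mul_rpow (by norm_num) hmx
      _ ≤ _ := by
        gcongr
        rcases max_cases |y| 1 with ⟨e, _⟩ | ⟨e, _⟩ <;> rw [e]
        · linarith
        · rw [Real.one_rpow]; linarith
  have hIθ := ((Measure.integrable_compProd_iff hI.aestronglyMeasurable).1 hI).1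
  have hposθ := Measure.ae_ae_of_ae_compProd hf_pos
  have hGm : Measurable fun z : Θ × 𝒳 => ENNReal.ofReal (|f z.2 / μ z.1 - 1| ^ s) := by fun_prop
  have hLm : Measurable fun z : Θ × 𝒳 =>
      ENNReal.ofReal ((1 + |Real.log (f z.2 / μ z.1)| ^ q) * g z.1 ^ q) := by fun_prop
  set Γ : Θ → ENNReal := fun θ => ∫⁻ y, ENNReal.ofReal (|f y / μ θ - 1| ^ s) ∂(κ θ) with hΓ
  set Λ : Θ → ENNReal := fun θ =>
    ∫⁻ y, ENNReal.ofReal ((1 + |Real.log (f y / μ θ)| ^ q) * g θ ^ q) ∂(κ θ) with hΛ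
  have hΓm : Measurable Γ := hGm.lintegral_kernel_prod_right'
  have hΛm : Measurable Λ := hLm.lintegral_kernel_prod_right'
  have hΓf : ∫⁻ θ, Γ θ ∂ν ≠ ⊤ := by
    have := Measure.lintegral_compProd (μ := ν) (κ := κ) hGm
    rw [hΓ, ← this]
    exact hI.lintegral_lt_top.ne
  have hΛf : ∫⁻ θ, Λ θ ∂ν ≠ ⊤ := by
    have := Measure.lintegral_compProd (μ := ν) (κ := κ) hLm
    rw [hΛ, ← this]
    exact hmom2.lintegral_lt_top.ne
  set c1 : ℝ := 20 ^ (q / 2) * (2 + 2 * q ^ q) with hc1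
  have hc10 : 0 ≤ c1 := by positivity
  have hK := mzK_pos s hs
  set G : ℝ := (∫⁻ θ, Γ θ ∂ν).toReal with hG
  set L : ℝ := (∫⁻ θ, Λ θ ∂ν).toReal with hL
  have hG0 : 0 ≤ G := ENNReal.toReal_nonneg
  have hL0 : 0 ≤ L := ENNReal.toReal_nonneg
  set D : ℝ := (c1 * L) ^ (2 / q) * (2 * mzK s * G) ^ ((q - 2) / q) with hD
  have hD0 : 0 ≤ D := by positivity
  refine ⟨D * 2 ^ r + 1, by positivity, ?_⟩
  intro ℓ hℓ
  obtain ⟨k, rfl⟩ : ∃ k, ℓ = k + 1 := ⟨ℓ - 1, by omega⟩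
  simp only [Nat.add_sub_cancel]
  set m := M₀ * 2 ^ k with hmdef
  have hm2 : M₀ * 2 ^ (k + 1) = 2 * m := by rw [hmdef, pow_succ]; ring
  have hm : 1 ≤ m := Nat.one_le_iff_ne_zero.2 (by positivity)
  have hm0 : (0:ℝ) < m := by exact_mod_cast hm
  set A := Finset.univ.filter (fun i : Fin (M₀ * 2 ^ (k + 1)) => (i : ℕ) < m) with hA
  set B := Finset.univ.filter (fun i : Fin (M₀ * 2 ^ (k + 1)) => ¬ (i : ℕ) < m) with hB
  have hAc : A.card = m := by
    rw [hA, Fin.card_filter_val_lt, hm2]; omega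
  have hBc : B.card = m := by
    have h := Finset.card_filter_add_card_filter_not (s := Finset.univ)
      (fun i : Fin (M₀ * 2 ^ (k + 1)) => (i : ℕ) < m)
    rw [← hA, ← hB, hAc, Finset.card_univ, Fintype.card_fin] at h
    have h' := h.trans hm2
    omega
  have hAne : A.Nonempty := by rw [← Finset.card_pos]; omega
  have hBne : B.Nonempty := by rw [← Finset.card_pos]; omega
  have hbound : ∀ᵐ θ ∂ν, ∫⁻ x : Fin (M₀ * 2 ^ (k + 1)) → 𝒳,
          ENNReal.ofReal
            ((Real.log ((∑ i, f (x i)) / (M₀ * 2 ^ (k + 1) : ℕ))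
              - (1 / 2) *
                (Real.log ((∑ i ∈ A, f (x i)) / (m : ℕ))
                  + Real.log ((∑ i ∈ B, f (x i)) / (m : ℕ)))) ^ 2 * g θ ^ 2)
        ∂(Measure.pi fun _ => κ θ)
      ≤ (ENNReal.ofReal c1 * Λ θ) ^ (2 / q) *
        (ENNReal.ofReal (2 * mzK s * (m : ℝ) ^ (-(s / 2))) * Γ θ) ^ ((q - 2) / q) := by
    filter_upwards [hμ, hIθ, hposθ] with θ h1 h2 h3
    obtain ⟨hfi, hμp⟩ := h1
    change 0 < μ θ at hμp
    have hcore := core (ι := Fin (M₀ * 2 ^ (k + 1))) (κ θ) (fun y => f y / μ θ) (by fun_prop)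
      (by filter_upwards [h3] with y hy using div_pos hy hμp) (hfi.div_const _)
      (by rw [integral_div]; exact div_self hμp.ne') hs hq hsq h2 (g θ) (hg_nonneg θ) A B hm
      hAc hBc
    refine le_trans (lintegral_mono_ae ?_) hcore
    have hae : ∀ᵐ x ∂(Measure.pi fun _ : Fin (M₀ * 2 ^ (k + 1)) => κ θ), ∀ i, 0 < f (x i) := by
      rw [ae_all_iff]
      intro i
      exact (measurePreserving_eval (fun _ : Fin (M₀ * 2 ^ (k + 1)) => κ θ)
        i).quasiMeasurePreserving.ae h3
    filter_upwards [hae] with x hx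
    apply le_of_eq
    congr 3
    have hsum : ∑ i, f (x i) = ∑ i ∈ A, f (x i) + ∑ i ∈ B, f (x i) :=
      (Finset.sum_filter_add_sum_filter_not _ _ _).symm
    have pa : 0 < ∑ i ∈ A, f (x i) := Finset.sum_pos (fun i _ => hx i) hAne
    have pb : 0 < ∑ i ∈ B, f (x i) := Finset.sum_pos (fun i _ => hx i) hBne
    have hcast : ((M₀ * 2 ^ (k + 1) : ℕ) : ℝ) = ((2 * m : ℕ) : ℝ) := congrArg _ hm2
    rw [hsum]
    simp only [← Finset.sum_div]
    generalize ∑ i ∈ A, f (x i) = a at pa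
    generalize ∑ i ∈ B, f (x i) = b at pb
    rw [hcast]
    unfold dl
    have e1 : (a + b) / ((2 * m : ℕ) : ℝ) = μ θ * ((a / μ θ / m + b / μ θ / m) / 2) := by
      push_cast; field_simp
    have e2 : a / (m : ℝ) = μ θ * (a / μ θ / m) := by field_simp
    have e3 : b / (m : ℝ) = μ θ * (b / μ θ / m) := by field_simp
    rw [e1, e2, e3, Real.log_mul hμp.ne' (by positivity), Real.log_mul hμp.ne' (by positivity),
      Real.log_mul hμp.ne' (by positivity)]
    ring
  refine (lintegral_mono_ae hbound).trans ?_
  refine (ENNReal.lintegral_mul_norm_pow_le (by fun_prop) (by fun_prop) (by positivity)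
    (by positivity) (by field_simp; ring)).trans ?_
  rw [lintegral_const_mul _ hΛm, lintegral_const_mul _ hΓm, ← ENNReal.ofReal_toReal hΓf,
    ← ENNReal.ofReal_toReal hΛf, ← hG, ← hL, ← ENNReal.ofReal_mul hc10,
    ← ENNReal.ofReal_mul (by positivity), ENNReal.ofReal_rpow_of_nonneg (by positivity)
    (by positivity), ENNReal.ofReal_rpow_of_nonneg (by positivity) (by positivity),
    ← ENNReal.ofReal_mul (by positivity)]
  apply ENNReal.ofReal_le_ofReal
  have e1 : (2 * mzK s * (m:ℝ) ^ (-(s / 2)) * G) ^ ((q - 2) / q)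
      = (2 * mzK s * G) ^ ((q - 2) / q) * (m:ℝ) ^ (-r) := by
    rw [mul_right_comm, Real.mul_rpow (by positivity) (by positivity), ← Real.rpow_mul hm0.le,
      neg_mul, hrs]
  have e2 : (m:ℝ) ^ (-r) ≤ 2 ^ r * 2 ^ (-r * ((k + 1 : ℕ) : ℝ)) := by
    have h1 : ((2:ℝ) ^ k) ≤ m := by
      rw [hmdef]; push_cast
      have : (1:ℝ) ≤ M₀ := by exact_mod_cast hM₀
      have h2 : (0:ℝ) ≤ 2 ^ k := by positivity
      nlinarith
    calc (m:ℝ) ^ (-r) ≤ ((2:ℝ) ^ k) ^ (-r) :=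
          Real.rpow_le_rpow_of_nonpos (by positivity) h1 (by linarith)
      _ = _ := by
        rw [← Real.rpow_natCast, ← Real.rpow_mul (by norm_num), ← Real.rpow_add (by norm_num)]
        congr 1; push_cast; ring
  have e3 : 0 ≤ (2:ℝ) ^ (-r * ((k + 1 : ℕ) : ℝ)) := by positivity
  rw [e1, ← mul_assoc, ← hD]
  calc D * (m:ℝ) ^ (-r) ≤ D * (2 ^ r * 2 ^ (-r * ((k + 1 : ℕ) : ℝ))) := by gcongr
    _ ≤ (D * 2 ^ r + 1) * 2 ^ (-r * ((k + 1 : ℕ) : ℝ)) := by linarith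
end

section
/- Suppose that the λ-gradient of log f is uniformly bounded, i.e. sup over (u, v) of ‖J(u) · h(v, θ(u)) / f(v, θ(u))‖_∞ < ∞, and that there exists p > 2 with E[|f(v,θ)/μ(θ)|^p] < ∞, where θ = θ(u) and (u, v) are distributed according to the outer and inner sampling distributions. Then E[‖J(u) · Δψ̃_{θ,ℓ}‖₂²] = O(2^{−rℓ}) as ℓ → ∞, with r = min(p/2, 2) ∈ (1, 2]. -/
open MeasureTheory ProbabilityTheory


lemma aux_taylor_one (q x : ℝ) (hq2 : 2 ≤ q) (hq4 : q ≤ 4) :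
    |1 + x| ^ q ≤ 1 + q * x + 20 * (x ^ 2 + |x| ^ q) := by
  have hxq : 0 ≤ |x| ^ q := by positivity
  by_cases hx : |x| ≤ 1
  · have hx' := abs_le.1 hx
    have e1 : |1 + x| ^ q = (1 + (2 * x + x ^ 2)) ^ (q / 2) := by
      rw [show 1 + (2 * x + x ^ 2) = |1 + x| ^ (2:ℝ) by
        rw [Real.rpow_two, sq_abs]; ring, ← Real.rpow_mul (abs_nonneg _)]
      congr 1; ring
    set y := 2 * x + x ^ 2 with hy
    have hy1 : 0 ≤ 1 + y := by nlinarith [sq_nonneg (1 + x)]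
    have e2 : (1 + y) ^ (q / 2) ≤ (1 + y) * (1 + (q / 2 - 1) * y) := by
      have : (1 + y) ^ (q / 2) = (1 + y) * (1 + y) ^ (q / 2 - 1) := by
        rcases hy1.eq_or_lt with h0 | h0
        · rw [← h0, Real.zero_rpow (by linarith)]; ring
        · rw [Real.rpow_sub_one h0.ne']; field_simp
      rw [this]
      exact mul_le_mul_of_nonneg_left
        (rpow_one_add_le_one_add_mul_self (by linarith) (by linarith) (by linarith)) hy1
    rw [e1]
    refine e2.trans ?_
    have h9 : (2 + x) ^ 2 ≤ 9 := by nlinarith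
    have h10 : (q / 2 - 1) * y ^ 2 ≤ 9 * x ^ 2 := by
      have : y ^ 2 = x ^ 2 * (2 + x) ^ 2 := by rw [hy]; ring
      rw [this]
      have h11 : x ^ 2 * (2 + x) ^ 2 ≤ x ^ 2 * 9 := mul_le_mul_of_nonneg_left h9 (sq_nonneg _)
      nlinarith [mul_nonneg (sq_nonneg x) (sq_nonneg (2 + x))]
    have h12 : q / 2 * x ^ 2 ≤ 2 * x ^ 2 := by nlinarith [sq_nonneg x]
    have : (1 + y) * (1 + (q / 2 - 1) * y) = 1 + q * x + q / 2 * x ^ 2 + (q / 2 - 1) * y ^ 2 := by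
      rw [hy]; ring
    rw [this]
    nlinarith [sq_nonneg x]
  · push Not at hx
    have h1 : |1 + x| ≤ 2 * |x| := by
      calc |1 + x| ≤ |1| + |x| := abs_add_le _ _
        _ ≤ 2 * |x| := by rw [abs_one]; linarith
    have h2 : |1 + x| ^ q ≤ 16 * |x| ^ q := by
      calc |1 + x| ^ q ≤ (2 * |x|) ^ q := Real.rpow_le_rpow (abs_nonneg _) h1 (by linarith)
        _ = 2 ^ q * |x| ^ q := Real.mul_rpow (by norm_num) (abs_nonneg _)
        _ ≤ 16 * |x| ^ q := by
          gcongr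
          calc (2:ℝ) ^ q ≤ 2 ^ (4:ℝ) := Real.rpow_le_rpow_of_exponent_le (by norm_num) hq4
            _ = 16 := by norm_num
    have h3 : |x| ≤ |x| ^ q := Real.self_le_rpow_of_one_le hx.le (by linarith)
    have h4 : -(4 * |x|) ≤ q * x := by nlinarith [neg_abs_le x, abs_nonneg x]
    nlinarith [sq_nonneg x]

lemma aux_taylor_s2 (q a b : ℝ) (hq2 : 2 ≤ q) (hq4 : q ≤ 4) :
    |a + b| ^ q ≤ |a| ^ q + q * ((|a| ^ (q - 2) * a) * b)
      + 20 * (|a| ^ (q - 2) * b ^ 2 + |b| ^ q) := by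
  rcases eq_or_ne a 0 with rfl | ha
  · have h1 : 0 ≤ |b| ^ q := by positivity
    have h2 : 0 ≤ |(0:ℝ)| ^ (q - 2) * b ^ 2 := by positivity
    have h3 : 0 ≤ |(0:ℝ)| ^ q := by positivity
    simp only [zero_add, mul_zero, zero_mul, add_zero]
    linarith
  · have ha' : 0 < |a| := abs_pos.2 ha
    have h := aux_taylor_one q (b / a) hq2 hq4
    have h' := mul_le_mul_of_nonneg_left h (show 0 ≤ |a| ^ q by positivity)
    have e1 : |a| ^ q * |1 + b / a| ^ q = |a + b| ^ q := by
      rw [← Real.mul_rpow (abs_nonneg _) (abs_nonneg _), ← abs_mul]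
      congr 2; field_simp
    have e2 : |a| ^ q * |b / a| ^ q = |b| ^ q := by
      rw [← Real.mul_rpow (abs_nonneg _) (abs_nonneg _), ← abs_mul]
      congr 2; field_simp
    have e3 : |a| ^ q = |a| ^ (q - 2) * a ^ 2 := by
      rw [← sq_abs a, ← Real.rpow_two, ← Real.rpow_add ha']; congr 1; ring
    rw [e1] at h'
    refine h'.trans (le_of_eq ?_)
    have e4 : |a| ^ q * (b / a) ^ 2 = |a| ^ (q - 2) * b ^ 2 := by
      rw [e3]; field_simp
    have e5 : |a| ^ q * (q * (b / a)) = q * ((|a| ^ (q - 2) * a) * b) := by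
      rw [e3]; field_simp
    calc _ = |a| ^ q + |a| ^ q * (q * (b / a)) + 20 * (|a| ^ q * (b / a) ^ 2
        + |a| ^ q * |b / a| ^ q) := by ring
      _ = _ := by rw [e2, e4, e5]

lemma aux_young (q a b n : ℝ) (hq2 : 2 ≤ q) (hn : 1 ≤ n) :
    |a| ^ (q - 2) * b ^ 2 ≤ n⁻¹ * |a| ^ q + n ^ ((q - 2) / 2) * |b| ^ q := by
  have hn0 : 0 < n := by linarith
  have key : ∀ c : ℝ, |c| ^ (q - 2) * c ^ 2 = |c| ^ q := by
    intro c
    rcases eq_or_ne c 0 with rfl | hc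
    · simp [Real.zero_rpow (show q ≠ 0 by linarith)]
    · rw [← sq_abs c, ← Real.rpow_two, ← Real.rpow_add (abs_pos.2 hc)]; congr 1; ring
  by_cases h : n * b ^ 2 ≤ a ^ 2
  · have : b ^ 2 ≤ n⁻¹ * a ^ 2 := by
      rw [inv_mul_eq_div, le_div_iff₀ hn0]; linarith
    have h2 : 0 ≤ n ^ ((q - 2) / 2) * |b| ^ q := by positivity
    calc |a| ^ (q - 2) * b ^ 2 ≤ |a| ^ (q - 2) * (n⁻¹ * a ^ 2) := by gcongr
      _ = n⁻¹ * |a| ^ q := by rw [← key a]; ring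
      _ ≤ _ := by linarith
  · push Not at h
    have h2 : 0 ≤ n⁻¹ * |a| ^ q := by positivity
    have h3 : |a| ^ (q - 2) ≤ n ^ ((q - 2) / 2) * |b| ^ (q - 2) := by
      have e : ∀ c : ℝ, |c| ^ (q - 2) = (c ^ 2) ^ ((q - 2) / 2) := by
        intro c
        rw [← sq_abs c, ← Real.rpow_two, ← Real.rpow_mul (abs_nonneg _)]; congr 1; ring
      rw [e a, e b, ← Real.mul_rpow hn0.le (sq_nonneg _)]
      exact Real.rpow_le_rpow (sq_nonneg _) h.le (by linarith)
    calc |a| ^ (q - 2) * b ^ 2 ≤ (n ^ ((q - 2) / 2) * |b| ^ (q - 2)) * b ^ 2 := by gcongr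
      _ = n ^ ((q - 2) / 2) * |b| ^ q := by rw [← key b]; ring
      _ ≤ _ := by linarith

lemma aux_moment {Ω ι : Type*} [MeasurableSpace Ω] (P : Measure Ω) [IsProbabilityMeasure P]
    (X : ι → Ω → ℝ) (hXm : ∀ i, Measurable (X i)) (hind : iIndepFun X P)
    (q : ℝ) (hq2 : 2 ≤ q) (hq4 : q ≤ 4)
    (hint : ∀ i, MemLp (X i) (ENNReal.ofReal q) P) (hmean : ∀ i, ∫ ω, X i ω ∂P = 0)
    (m : ℝ) (hm : ∀ i, ∫ ω, |X i ω| ^ q ∂P ≤ m) (hm0 : 0 ≤ m) (n : ℝ) (hn : 1 ≤ n)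
    (s : Finset ι) :
    Integrable (fun ω => |∑ i ∈ s, X i ω| ^ q) P ∧
    ∫ ω, |∑ i ∈ s, X i ω| ^ q ∂P ≤
      (1 + 20 / n) ^ s.card * (s.card * (40 * n ^ ((q - 2) / 2) * m)) := by
  classical
  have hn0 : 0 < n := by linarith
  have hq0 : (ENNReal.ofReal q).toReal = q := ENNReal.toReal_ofReal (by linarith)
  have hI : ∀ Y : Ω → ℝ, MemLp Y (ENNReal.ofReal q) P → Integrable (fun ω => |Y ω| ^ q) P := by
    intro Y hY
    have := hY.integrable_norm_rpow'
    simpa [hq0] using this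
  have hS : ∀ s : Finset ι, MemLp (fun ω => ∑ i ∈ s, X i ω) (ENNReal.ofReal q) P :=
    fun s => memLp_finsetSum s (fun i _ => hint i)
  have hSm : ∀ s : Finset ι, Measurable (fun ω => ∑ i ∈ s, X i ω) :=
    fun s => Finset.measurable_sum s (fun i _ => hXm i)
  refine ⟨hI _ (hS s), ?_⟩
  have h1n : 1 ≤ n ^ ((q - 2) / 2) := Real.one_le_rpow hn (by linarith)
  induction s using Finset.induction_on with
  | empty =>
    simp [Real.zero_rpow (show q ≠ 0 by linarith)]
  | insert i s hi ih =>
    set S : Ω → ℝ := fun ω => ∑ j ∈ s, X j ω with hSdef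
    set r : ℝ := 1 + 20 / n with hr
    set D : ℝ := 40 * n ^ ((q - 2) / 2) * m with hD
    have hr1 : 1 ≤ r := by
      have : 0 ≤ 20 / n := by positivity
      linarith
    have hD0 : 0 ≤ D := by positivity
    have hX1 : Integrable (X i) P := (hint i).integrable (by
      rw [← ENNReal.ofReal_one]; exact ENNReal.ofReal_le_ofReal (by linarith))
    have hφm : Measurable (fun x : ℝ => |x| ^ (q - 2) * x) := by fun_prop
    have hSq := hI _ (hS s)
    have hXq := hI _ (hint i)
    have hS1 : Integrable (fun ω => |S ω| ^ (q - 2) * S ω) P := by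
      refine Integrable.mono' ((integrable_const (1:ℝ)).add hSq)
        (hφm.comp (hSm s)).aestronglyMeasurable (Filter.Eventually.of_forall fun ω => ?_)
      simp only [Pi.add_apply, Real.norm_eq_abs, abs_mul]
      rw [abs_of_nonneg (show 0 ≤ |S ω| ^ (q - 2) by positivity)]
      change _ ≤ 1 + |S ω| ^ q
      by_cases hle : |S ω| ≤ 1
      · have h2 : |S ω| ^ (q - 2) ≤ 1 := Real.rpow_le_one (abs_nonneg _) hle (by linarith)
        have h3 : 0 ≤ |S ω| ^ q := by positivity
        nlinarith [mul_le_one₀ h2 (abs_nonneg _) hle]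
      · push Not at hle
        have : |S ω| ^ (q - 2) * |S ω| = |S ω| ^ (q - 1) := by
          rw [← Real.rpow_add_one (by linarith)]; congr 1; ring
        rw [this]
        have := Real.rpow_le_rpow_of_exponent_le hle.le (show q - 1 ≤ q by linarith)
        linarith
    have hindS : IndepFun S (X i) P := by
      have := hind.indepFun_finsetSum_of_notMem (fun i => (hXm i)) hi
      convert this using 1
      ext ω; simp [hSdef]
    have hind2 : IndepFun (fun ω => |S ω| ^ (q - 2) * S ω) (X i) P :=
      hindS.comp hφm measurable_id
    have hcross : ∫ ω, (|S ω| ^ (q - 2) * S ω) * X i ω ∂P = 0 := by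
      rw [hind2.integral_fun_mul_eq_mul_integral hS1.aestronglyMeasurable
        hX1.aestronglyMeasurable, hmean i, mul_zero]
    have hcrossI : Integrable (fun ω => (|S ω| ^ (q - 2) * S ω) * X i ω) P :=
      hind2.integrable_mul hS1 hX1
    have hpt : ∀ ω, |∑ j ∈ insert i s, X j ω| ^ q ≤
        (r * |S ω| ^ q + q * ((|S ω| ^ (q - 2) * S ω) * X i ω))
          + (40 * n ^ ((q - 2) / 2)) * |X i ω| ^ q := by
      intro ω
      rw [Finset.sum_insert hi, add_comm]
      have h1 := aux_taylor_s2 q (S ω) (X i ω) hq2 hq4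
      have h2 := aux_young q (S ω) (X i ω) n hq2 hn
      have h3 : 0 ≤ |X i ω| ^ q := by positivity
      have h4 : |X i ω| ^ q ≤ n ^ ((q - 2) / 2) * |X i ω| ^ q := le_mul_of_one_le_left h3 h1n
      have h5 : r * |S ω| ^ q = |S ω| ^ q + 20 * (n⁻¹ * |S ω| ^ q) := by rw [hr]; ring
      refine h1.trans ?_
      linarith
    have hA : Integrable (fun ω => r * |S ω| ^ q + q * ((|S ω| ^ (q - 2) * S ω) * X i ω)) P :=
      (hSq.const_mul r).add (hcrossI.const_mul q)
    have hB : Integrable (fun ω => (40 * n ^ ((q - 2) / 2)) * |X i ω| ^ q) P :=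
      hXq.const_mul _
    have hle := integral_mono (hI _ (hS (insert i s))) (hA.add hB) hpt
    refine hle.trans ?_
    simp only [Pi.add_apply]
    rw [integral_add hA hB, integral_add (hSq.const_mul r) (hcrossI.const_mul q),
      integral_const_mul, integral_const_mul, integral_const_mul, hcross,
      Finset.card_insert_of_notMem hi]
    have h6 : (40 * n ^ ((q - 2) / 2)) * ∫ ω, |X i ω| ^ q ∂P ≤ D :=
      mul_le_mul_of_nonneg_left (hm i) (by positivity)
    have h7 : r * ∫ ω, |S ω| ^ q ∂P ≤ r * (r ^ s.card * (s.card * D)) :=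
      mul_le_mul_of_nonneg_left ih (by linarith)
    have h8 : D ≤ r ^ (s.card + 1) * D :=
      le_mul_of_one_le_left hD0 (one_le_pow₀ hr1)
    push_cast
    calc _ ≤ r * (r ^ s.card * (s.card * D)) + r ^ (s.card + 1) * D := by
          rw [mul_zero, add_zero]; linarith
      _ = _ := by ring

lemma aux_moment' {Ω ι : Type*} [MeasurableSpace Ω] (P : Measure Ω) [IsProbabilityMeasure P]
    (X : ι → Ω → ℝ) (hXm : ∀ i, Measurable (X i)) (hind : iIndepFun X P)
    (q : ℝ) (hq2 : 2 ≤ q) (hq4 : q ≤ 4)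
    (hint : ∀ i, MemLp (X i) (ENNReal.ofReal q) P) (hmean : ∀ i, ∫ ω, X i ω ∂P = 0)
    (m : ℝ) (hm : ∀ i, ∫ ω, |X i ω| ^ q ∂P ≤ m) (hm0 : 0 ≤ m) (N : ℕ) (hN : 1 ≤ N)
    (s : Finset ι) (hs : s.card = N) :
    Integrable (fun ω => |(N:ℝ)⁻¹ * ∑ i ∈ s, X i ω| ^ q) P ∧
    ∫ ω, |(N:ℝ)⁻¹ * ∑ i ∈ s, X i ω| ^ q ∂P ≤
      40 * Real.exp 20 * (N:ℝ) ^ (-(q / 2)) * m := by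
  have hN' : (1:ℝ) ≤ N := by exact_mod_cast hN
  have hN0 : (0:ℝ) < N := by linarith
  obtain ⟨h1, h2⟩ := aux_moment P X hXm hind q hq2 hq4 hint hmean m hm hm0 N hN' s
  have e : (fun ω => |(N:ℝ)⁻¹ * ∑ i ∈ s, X i ω| ^ q)
      = fun ω => (N:ℝ) ^ (-q) * |∑ i ∈ s, X i ω| ^ q := by
    ext ω
    rw [abs_mul, Real.mul_rpow (abs_nonneg _) (abs_nonneg _), abs_of_pos (inv_pos.2 hN0),
      Real.inv_rpow hN0.le, Real.rpow_neg hN0.le]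
  rw [e]
  refine ⟨h1.const_mul _, ?_⟩
  rw [integral_const_mul]
  rw [hs] at h2
  have h3 : (1 + 20 / (N:ℝ)) ^ N ≤ Real.exp 20 := by
    calc (1 + 20 / (N:ℝ)) ^ N ≤ (Real.exp (20 / N)) ^ N := by
          gcongr
          linarith [Real.add_one_le_exp (20 / (N:ℝ))]
      _ = Real.exp 20 := by
          rw [← Real.exp_nat_mul]; congr 1; field_simp
  have e2 : (N:ℝ) ^ (-q) * (N * (N:ℝ) ^ ((q - 2) / 2)) = (N:ℝ) ^ (-(q / 2)) := by
    nth_rewrite 2 [← Real.rpow_one (N:ℝ)]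
    rw [← Real.rpow_add hN0, ← Real.rpow_add hN0]; congr 1; ring
  calc (N:ℝ) ^ (-q) * ∫ ω, |∑ i ∈ s, X i ω| ^ q ∂P
      ≤ (N:ℝ) ^ (-q) * (Real.exp 20 * (N * (40 * (N:ℝ) ^ ((q - 2) / 2) * m))) := by
        refine mul_le_mul_of_nonneg_left (h2.trans ?_) (by positivity)
        exact mul_le_mul_of_nonneg_right h3 (by positivity)
    _ = 40 * Real.exp 20 * ((N:ℝ) ^ (-q) * (N * (N:ℝ) ^ ((q - 2) / 2))) * m := by ring
    _ = _ := by rw [e2]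

set_option maxHeartbeats 1000000 in
lemma aux_det (q K b₁ b₂ r₁ r₂ ρ : ℝ) (hq2 : 2 ≤ q) (hq4 : q ≤ 4) (hK : 1 ≤ K)
    (hb₁ : 0 < b₁) (hb₂ : 0 < b₂) (hr₁ : |r₁| ≤ K) (hr₂ : |r₂| ≤ K) :
    ((b₁ * r₁ + b₂ * r₂) / (b₁ + b₂) - 1 / 2 * (r₁ + r₂)) ^ 2 ≤
      16 * K ^ 2 * ((|b₁ * (r₁ - ρ)| ^ q + |b₂ * (r₂ - ρ)| ^ q)
        + (|b₁ - 1| ^ q + |b₂ - 1| ^ q)) := by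
  set Δ := (b₁ * r₁ + b₂ * r₂) / (b₁ + b₂) - 1 / 2 * (r₁ + r₂) with hΔ
  have hq0 : 0 < q := by linarith
  have hb : 0 < b₁ + b₂ := by linarith
  have eΔ : Δ = (r₁ - r₂) * (b₁ - b₂) / (2 * (b₁ + b₂)) := by
    rw [hΔ]; field_simp; ring
  have aΔ : |Δ| = |r₁ - r₂| * |b₁ - b₂| / (2 * (b₁ + b₂)) := by
    rw [eΔ, abs_div, abs_mul, abs_of_pos (show 0 < 2 * (b₁ + b₂) by linarith)]
  have hr : |r₁ - r₂| ≤ 2 * K := (abs_sub _ _).trans (by linarith)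
  have hΔK : |Δ| ≤ K := by
    rw [aΔ, div_le_iff₀ (by linarith)]
    have : |b₁ - b₂| ≤ b₁ + b₂ := by rw [abs_le]; constructor <;> linarith
    calc |r₁ - r₂| * |b₁ - b₂| ≤ (2 * K) * (b₁ + b₂) :=
          mul_le_mul hr this (abs_nonneg _) (by linarith)
      _ = _ := by ring
  have n1 : 0 ≤ |b₁ * (r₁ - ρ)| ^ q := by positivity
  have n2 : 0 ≤ |b₂ * (r₂ - ρ)| ^ q := by positivity
  have n3 : 0 ≤ |b₁ - 1| ^ q := by positivity
  have n4 : 0 ≤ |b₂ - 1| ^ q := by positivity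
  have hK2 : 0 ≤ K ^ 2 := sq_nonneg _
  have hΔ2 : Δ ^ 2 ≤ K ^ 2 := by
    rw [← sq_abs Δ]; gcongr
  have bad : ∀ b : ℝ, 1 / 2 ≤ |b - 1| → 1 ≤ 16 * |b - 1| ^ q := by
    intro b h
    have h1 : (1 / 2 : ℝ) ^ q ≤ |b - 1| ^ q := Real.rpow_le_rpow (by norm_num) h hq0.le
    have h2 : (1 / 2 : ℝ) ^ (4:ℝ) ≤ (1 / 2) ^ q :=
      Real.rpow_le_rpow_of_exponent_ge (by norm_num) (by norm_num) hq4
    norm_num at h2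
    norm_num at h1
    linarith
  by_cases c1 : 1 / 2 ≤ |b₁ - 1|
  · have := bad b₁ c1
    nlinarith [mul_nonneg hK2 n1, mul_nonneg hK2 n2, mul_nonneg hK2 n4]
  by_cases c2 : 1 / 2 ≤ |b₂ - 1|
  · have := bad b₂ c2
    nlinarith [mul_nonneg hK2 n1, mul_nonneg hK2 n2, mul_nonneg hK2 n3]
  push Not at c1 c2
  have hb1 : 1 / 2 ≤ b₁ := by linarith [(abs_lt.1 c1).1]
  have hb2 : 1 / 2 ≤ b₂ := by linarith [(abs_lt.1 c2).1]
  set s₁ := |b₁ * (r₁ - ρ)| with hs₁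
  set s₂ := |b₂ * (r₂ - ρ)| with hs₂
  set t₁ := |b₁ - 1| with ht₁
  set t₂ := |b₂ - 1| with ht₂
  have hs10 : 0 ≤ s₁ := abs_nonneg _
  have hs20 : 0 ≤ s₂ := abs_nonneg _
  have ht10 : 0 ≤ t₁ := abs_nonneg _
  have ht20 : 0 ≤ t₂ := abs_nonneg _
  have g1 : |r₁ - ρ| ≤ 2 * s₁ := by
    rw [hs₁, abs_mul, abs_of_pos hb₁]; nlinarith [abs_nonneg (r₁ - ρ)]
  have g2 : |r₂ - ρ| ≤ 2 * s₂ := by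
    rw [hs₂, abs_mul, abs_of_pos hb₂]; nlinarith [abs_nonneg (r₂ - ρ)]
  have g3 : |r₁ - r₂| ≤ 2 * (s₁ + s₂) := by
    have := abs_sub (r₁ - ρ) (r₂ - ρ)
    rw [show r₁ - ρ - (r₂ - ρ) = r₁ - r₂ by ring] at this
    linarith
  have g4 : |b₁ - b₂| ≤ t₁ + t₂ := by
    have := abs_sub (b₁ - 1) (b₂ - 1)
    rwa [show b₁ - 1 - (b₂ - 1) = b₁ - b₂ by ring] at this
  set x := max (max s₁ s₂) (max t₁ t₂) with hx
  have hx1 : s₁ ≤ x := by simp [hx]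
  have hx2 : s₂ ≤ x := by simp [hx]
  have hx3 : t₁ ≤ x := by simp [hx]
  have hx4 : t₂ ≤ x := by simp [hx]
  have hx0 : 0 ≤ x := hs10.trans hx1
  have hxq : x ^ q ≤ (s₁ ^ q + s₂ ^ q) + (t₁ ^ q + t₂ ^ q) := by
    rcases max_choice (max s₁ s₂) (max t₁ t₂) with h | h
    · rcases max_choice s₁ s₂ with h' | h' <;> rw [hx, h, h'] <;> linarith
    · rcases max_choice t₁ t₂ with h' | h' <;> rw [hx, h, h'] <;> linarith
  have g5 : |Δ| ≤ (2 * x) ^ 2 := by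
    rw [aΔ, div_le_iff₀ (by linarith)]
    have h1 : |r₁ - r₂| * |b₁ - b₂| ≤ (4 * x) * (2 * x) :=
      mul_le_mul (by linarith) (by linarith) (abs_nonneg _) (by linarith)
    have h2 : (2 * x) ^ 2 * 2 ≤ (2 * x) ^ 2 * (2 * (b₁ + b₂)) :=
      mul_le_mul_of_nonneg_left (by linarith) (sq_nonneg _)
    linarith [show (4 * x) * (2 * x) = (2 * x) ^ 2 * 2 by ring]
  have g6 : |Δ| ^ (q / 2) ≤ 16 * x ^ q := by
    calc |Δ| ^ (q / 2) ≤ ((2 * x) ^ 2) ^ (q / 2) :=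
          Real.rpow_le_rpow (abs_nonneg _) g5 (by linarith)
      _ = (2 * x) ^ q := by
          rw [← Real.rpow_two, ← Real.rpow_mul (by linarith)]; congr 1; ring
      _ = 2 ^ q * x ^ q := Real.mul_rpow (by norm_num) hx0
      _ ≤ 16 * x ^ q := by
          gcongr
          calc (2:ℝ) ^ q ≤ 2 ^ (4:ℝ) := Real.rpow_le_rpow_of_exponent_le (by norm_num) hq4
            _ = 16 := by norm_num
  have g7 : |Δ| ^ (2 - q / 2) ≤ K ^ 2 := by
    calc |Δ| ^ (2 - q / 2) ≤ K ^ (2 - q / 2) :=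
          Real.rpow_le_rpow (abs_nonneg _) hΔK (by linarith)
      _ ≤ K ^ (2:ℝ) := Real.rpow_le_rpow_of_exponent_le hK (by linarith)
      _ = K ^ 2 := Real.rpow_two _
  have g8 : Δ ^ 2 = |Δ| ^ (q / 2) * |Δ| ^ (2 - q / 2) := by
    rw [← sq_abs Δ, ← Real.rpow_two]
    rcases (abs_nonneg Δ).eq_or_lt with h | h
    · rw [← h, Real.zero_rpow (by norm_num), Real.zero_rpow (by linarith), zero_mul]
    · rw [← Real.rpow_add h]; congr 1; ring
  rw [g8]
  calc |Δ| ^ (q / 2) * |Δ| ^ (2 - q / 2) ≤ (16 * x ^ q) * K ^ 2 :=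
        mul_le_mul g6 g7 (by positivity) (by positivity)
    _ = 16 * K ^ 2 * x ^ q := by ring
    _ ≤ _ := mul_le_mul_of_nonneg_left hxq (by positivity)

lemma aux_moment_pi {V ι : Type*} [Fintype ι] [MeasurableSpace V] (μV : Measure V)
    [IsProbabilityMeasure μV] (φ : V → ℝ) (hφ : Measurable φ)
    (q : ℝ) (hq2 : 2 ≤ q) (hq4 : q ≤ 4)
    (hint : Integrable (fun v => |φ v| ^ q) μV) (hmean : ∫ v, φ v ∂μV = 0)
    (m : ℝ) (hm : ∫ v, |φ v| ^ q ∂μV ≤ m) (N : ℕ) (hN : 1 ≤ N)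
    (s : Finset ι) (hs : s.card = N) :
    Integrable (fun v : ι → V => |(N:ℝ)⁻¹ * ∑ i ∈ s, φ (v i)| ^ q) (Measure.pi fun _ => μV) ∧
    ∫ v : ι → V, |(N:ℝ)⁻¹ * ∑ i ∈ s, φ (v i)| ^ q ∂(Measure.pi fun _ => μV) ≤
      40 * Real.exp 20 * (N:ℝ) ^ (-(q / 2)) * m := by
  have hLp : MemLp φ (ENNReal.ofReal q) μV := by
    rw [← integrable_norm_rpow_iff hφ.aestronglyMeasurable
      (by simpa using (by linarith : 0 < q)) ENNReal.ofReal_ne_top,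
      ENNReal.toReal_ofReal (by linarith)]
    simpa using hint
  refine aux_moment' (Measure.pi fun _ => μV) (fun i (v : ι → V) => φ (v i))
    (fun i => hφ.comp (measurable_pi_apply i))
    (iIndepFun_pi (X := fun _ => φ) fun _ => hφ.aemeasurable) q hq2 hq4
    (fun i => hLp.comp_measurePreserving (measurePreserving_eval (fun _ => μV) i))
    (fun i => ?_) m (fun i => ?_) ?_ N hN s hs
  · rw [integral_comp_eval (μ := fun _ : ι => μV) (f := φ) hφ.aestronglyMeasurable, hmean]
  · have hφ2 : Measurable (fun v => |φ v| ^ q) := by fun_prop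
    rw [integral_comp_eval (μ := fun _ : ι => μV) (f := fun v => |φ v| ^ q)
      hφ2.aestronglyMeasurable]
    exact hm
  · exact le_trans (integral_nonneg fun v => by positivity) hm

lemma aux_core {V ι : Type*} [Fintype ι] [MeasurableSpace V] (μV : Measure V)
    [IsProbabilityMeasure μV] (w g : V → ℝ) (hw : Measurable w) (hg : Measurable g)
    (hw0 : ∀ v, 0 < w v) (hw1 : Integrable w μV) (hwm : ∫ v, w v ∂μV = 1)
    (q : ℝ) (hq2 : 2 ≤ q) (hq4 : q ≤ 4) (hwq : Integrable (fun v => w v ^ q) μV)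
    (K : ℝ) (hK : 1 ≤ K) (hgK : ∀ v, |g v| ≤ K) (N : ℕ) (hN : 1 ≤ N)
    (s t : Finset ι) (hs : s.card = N) (ht : t.card = N) :
    ∃ G : (ι → V) → ℝ, Integrable G (Measure.pi fun _ => μV) ∧
      (∀ v : ι → V, ((∑ i ∈ s, w (v i) * g (v i) + ∑ i ∈ t, w (v i) * g (v i)) /
        (∑ i ∈ s, w (v i) + ∑ i ∈ t, w (v i)) - 1 / 2 *
          ((∑ i ∈ s, w (v i) * g (v i)) / (∑ i ∈ s, w (v i))
            + (∑ i ∈ t, w (v i) * g (v i)) / (∑ i ∈ t, w (v i)))) ^ 2 ≤ G v) ∧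
      ∫ v, G v ∂(Measure.pi fun _ => μV) ≤
        (16 * K ^ 2 * (4 * (40 * Real.exp 20 * (16 * K ^ 4)))) * (N:ℝ) ^ (-(q / 2))
          * (1 + ∫ v, w v ^ q ∂μV) := by
  have hN0 : (0:ℝ) < N := by exact_mod_cast hN
  have hK4 : 1 ≤ K ^ 4 := one_le_pow₀ hK
  have hwg : Integrable (fun v => w v * g v) μV := by
    refine Integrable.mono' (hw1.mul_const K) (hw.mul hg).aestronglyMeasurable
      (Filter.Eventually.of_forall fun v => ?_)
    rw [Real.norm_eq_abs, abs_mul, abs_of_pos (hw0 v)]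
    exact mul_le_mul_of_nonneg_left (hgK v) (hw0 v).le
  set ρ := ∫ v, w v * g v ∂μV with hρ
  have hρK : |ρ| ≤ K := by
    calc |ρ| ≤ ∫ v, |w v * g v| ∂μV := abs_integral_le_integral_abs
      _ ≤ ∫ v, w v * K ∂μV := by
        refine integral_mono hwg.abs (hw1.mul_const K) fun v => ?_
        simp only [abs_mul, abs_of_pos (hw0 v)]
        exact mul_le_mul_of_nonneg_left (hgK v) (hw0 v).le
      _ = K := by rw [integral_mul_const, hwm, one_mul]
  set W := ∫ v, w v ^ q ∂μV with hW
  have hW0 : 0 ≤ W := integral_nonneg fun v => Real.rpow_nonneg (hw0 v).le _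
  set φ : V → ℝ := fun v => w v * (g v - ρ) with hφ
  set χ : V → ℝ := fun v => w v - 1 with hχ
  have hφm : Measurable φ := hw.mul (hg.sub_const ρ)
  have hχm : Measurable χ := hw.sub_const 1
  have hφb : ∀ v, |φ v| ^ q ≤ 16 * K ^ 4 * w v ^ q := by
    intro v
    have h1 : |φ v| ≤ (2 * K) * w v := by
      simp only [hφ]
      rw [abs_mul, abs_of_pos (hw0 v), mul_comm]
      refine mul_le_mul_of_nonneg_right ((abs_sub _ _).trans ?_) (hw0 v).le
      linarith [hgK v]
    calc |φ v| ^ q ≤ ((2 * K) * w v) ^ q := Real.rpow_le_rpow (abs_nonneg _) h1 (by linarith)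
      _ = (2 * K) ^ q * w v ^ q := Real.mul_rpow (by linarith) (hw0 v).le
      _ ≤ (2 * K) ^ (4:ℝ) * w v ^ q := by
        refine mul_le_mul_of_nonneg_right ?_ (Real.rpow_nonneg (hw0 v).le _)
        exact Real.rpow_le_rpow_of_exponent_le (by linarith) hq4
      _ = 16 * K ^ 4 * w v ^ q := by
        rw [show (4:ℝ) = ((4:ℕ):ℝ) by norm_num, Real.rpow_natCast]; ring
  have hχb : ∀ v, |χ v| ^ q ≤ 1 + w v ^ q := by
    intro v
    have h0 := hw0 v
    have hwn : 0 ≤ w v ^ q := Real.rpow_nonneg h0.le _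
    by_cases h : w v ≤ 1
    · have : |χ v| ≤ 1 := by rw [abs_le]; simp only [hχ]; constructor <;> linarith
      have := Real.rpow_le_one (abs_nonneg _) this (show 0 ≤ q by linarith)
      linarith
    · push Not at h
      have : |χ v| ≤ w v := by rw [abs_le]; simp only [hχ]; constructor <;> linarith
      have := Real.rpow_le_rpow (abs_nonneg _) this (show 0 ≤ q by linarith)
      linarith
  have hφi : Integrable (fun v => |φ v| ^ q) μV := by
    refine Integrable.mono' (hwq.const_mul (16 * K ^ 4))
      (by fun_prop : Measurable fun v => |φ v| ^ q).aestronglyMeasurable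
      (Filter.Eventually.of_forall fun v => ?_)
    rw [Real.norm_eq_abs, abs_of_nonneg (by positivity)]
    exact hφb v
  have hχi : Integrable (fun v => |χ v| ^ q) μV := by
    refine Integrable.mono' ((integrable_const (1:ℝ)).add hwq)
      (by fun_prop : Measurable fun v => |χ v| ^ q).aestronglyMeasurable
      (Filter.Eventually.of_forall fun v => ?_)
    rw [Real.norm_eq_abs, abs_of_nonneg (by positivity)]
    exact hχb v
  set m := 16 * K ^ 4 * (1 + W) with hm
  have hφI : ∫ v, |φ v| ^ q ∂μV ≤ m := by
    have := integral_mono hφi (hwq.const_mul (16 * K ^ 4)) hφb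
    rw [integral_const_mul] at this
    refine this.trans ?_
    exact mul_le_mul_of_nonneg_left (by linarith) (by positivity)
  have hχI : ∫ v, |χ v| ^ q ∂μV ≤ m := by
    have := integral_mono hχi ((integrable_const (1:ℝ)).add hwq) hχb
    simp only [Pi.add_apply] at this
    rw [integral_add (integrable_const _) hwq] at this
    simp only [integral_const, probReal_univ, smul_eq_mul, mul_one] at this
    refine this.trans ?_
    exact le_mul_of_one_le_left (by linarith) (by linarith)
  have hφ0 : ∫ v, φ v ∂μV = 0 := by
    have : φ = fun v => w v * g v - w v * ρ := by ext v; simp only [hφ]; ring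
    rw [this, integral_sub hwg (hw1.mul_const ρ), integral_mul_const, hwm, one_mul, hρ, sub_self]
  have hχ0 : ∫ v, χ v ∂μV = 0 := by
    simp only [hχ]
    rw [integral_sub hw1 (integrable_const _), hwm]; simp
  obtain ⟨i1, b1⟩ := aux_moment_pi μV φ hφm q hq2 hq4 hφi hφ0 m hφI N hN s hs
  obtain ⟨i2, b2⟩ := aux_moment_pi μV φ hφm q hq2 hq4 hφi hφ0 m hφI N hN t ht
  obtain ⟨i3, b3⟩ := aux_moment_pi μV χ hχm q hq2 hq4 hχi hχ0 m hχI N hN s hs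
  obtain ⟨i4, b4⟩ := aux_moment_pi μV χ hχm q hq2 hq4 hχi hχ0 m hχI N hN t ht
  refine ⟨fun v => 16 * K ^ 2 * ((|(N:ℝ)⁻¹ * ∑ i ∈ s, φ (v i)| ^ q
      + |(N:ℝ)⁻¹ * ∑ i ∈ t, φ (v i)| ^ q) + (|(N:ℝ)⁻¹ * ∑ i ∈ s, χ (v i)| ^ q
      + |(N:ℝ)⁻¹ * ∑ i ∈ t, χ (v i)| ^ q)), ((i1.add i2).add (i3.add i4)).const_mul _, ?_, ?_⟩
  · intro v
    have key : ∀ r : Finset ι, r.card = N → 0 < ∑ i ∈ r, w (v i) ∧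
        |(∑ i ∈ r, w (v i) * g (v i)) / (∑ i ∈ r, w (v i))| ≤ K ∧
        (N:ℝ)⁻¹ * ∑ i ∈ r, φ (v i) = ((N:ℝ)⁻¹ * ∑ i ∈ r, w (v i)) *
          ((∑ i ∈ r, w (v i) * g (v i)) / (∑ i ∈ r, w (v i)) - ρ) ∧
        (N:ℝ)⁻¹ * ∑ i ∈ r, χ (v i) = (N:ℝ)⁻¹ * ∑ i ∈ r, w (v i) - 1 := by
      intro r hr
      have hpos : 0 < ∑ i ∈ r, w (v i) := by
        refine Finset.sum_pos (fun i _ => hw0 _) ?_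
        rw [← Finset.card_pos]; omega
      refine ⟨hpos, ?_, ?_, ?_⟩
      · rw [abs_div, abs_of_pos hpos, div_le_iff₀ hpos, Finset.mul_sum]
        refine (Finset.abs_sum_le_sum_abs _ _).trans (Finset.sum_le_sum fun i _ => ?_)
        rw [abs_mul, abs_of_pos (hw0 _), mul_comm]
        exact mul_le_mul_of_nonneg_right (hgK _) (hw0 _).le
      · have : ∑ i ∈ r, φ (v i) = ∑ i ∈ r, w (v i) * g (v i) - (∑ i ∈ r, w (v i)) * ρ := by
          simp only [hφ, mul_sub, Finset.sum_sub_distrib, Finset.sum_mul]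
        rw [this]
        field_simp
      · simp only [hχ, Finset.sum_sub_distrib, Finset.sum_const, hr, nsmul_eq_mul, mul_one, mul_sub]
        field_simp
    obtain ⟨p1, k1, f1, x1⟩ := key s hs
    obtain ⟨p2, k2, f2, x2⟩ := key t ht
    have hd := aux_det q K ((N:ℝ)⁻¹ * ∑ i ∈ s, w (v i)) ((N:ℝ)⁻¹ * ∑ i ∈ t, w (v i)) _ _ ρ
      hq2 hq4 hK (by positivity) (by positivity) k1 k2
    rw [← f1, ← f2, ← x1, ← x2] at hd
    refine le_trans (le_of_eq ?_) hd
    congr 2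
    field_simp
  · have i12 : Integrable (fun v : ι → V => |(N:ℝ)⁻¹ * ∑ i ∈ s, φ (v i)| ^ q
      + |(N:ℝ)⁻¹ * ∑ i ∈ t, φ (v i)| ^ q) (Measure.pi fun _ => μV) := i1.add i2
    have i34 : Integrable (fun v : ι → V => |(N:ℝ)⁻¹ * ∑ i ∈ s, χ (v i)| ^ q
      + |(N:ℝ)⁻¹ * ∑ i ∈ t, χ (v i)| ^ q) (Measure.pi fun _ => μV) := i3.add i4
    rw [integral_const_mul, integral_add i12 i34, integral_add i1 i2, integral_add i3 i4]
    calc _ ≤ 16 * K ^ 2 * (4 * (40 * Real.exp 20 * (N:ℝ) ^ (-(q / 2)) * m)) :=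
          mul_le_mul_of_nonneg_left (by linarith) (by positivity)
      _ = _ := by rw [hm]; ring

/-- MC convergence rate of the antithetic MLMC correction for the
re-parameterization gradient: if the λ-gradient of `log f`, i.e.
`J(u)·h(v,θ(u))/f(v,θ(u))`, is uniformly bounded in max-norm and
`E[|f(v,θ)/μ(θ)|^p] < ∞` for some `p > 2`, then
`E[‖J(u)·Δψ̃_{θ,ℓ}‖₂²] = O(2^{−rℓ})` with `r = min(p/2, 2)`.  Here
`θ = θ(u)` with `u ∼ μU`, the inner samples `v_1, …, v_{M_ℓ}` are iid `∼ μV`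
(modeled by the product measure), `ψ̃` is the ratio-of-means
`(Σ h(v_i,θ))/(Σ f(v_i,θ))`, and `Δψ̃_{θ,ℓ}` is the antithetic correction
built from the full sample and its two halves. -/
theorem stmt_2 {U V Θ : Type*} [MeasurableSpace U] [MeasurableSpace V]
    (μU : Measure U) [IsProbabilityMeasure μU]
    (μV : Measure V) [IsProbabilityMeasure μV]
    (θmap : U → Θ) (pdim ddim : ℕ)
    (f : V → Θ → ℝ) (h : V → Θ → Fin pdim → ℝ)
    (J : U → Matrix (Fin ddim) (Fin pdim) ℝ)
    (hf_meas : Measurable fun z : U × V => f z.2 (θmap z.1))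
    (hh_meas : Measurable fun z : U × V => h z.2 (θmap z.1))
    (hJ_meas : ∀ i j, Measurable fun u => J u i j)
    (hf_pos : ∀ v ϑ, 0 < f v ϑ)
    (hμ : ∀ u, Integrable (fun v => f v (θmap u)) μV ∧
      0 < ∫ v, f v (θmap u) ∂μV)
    (M₀ : ℕ) (hM₀ : 1 ≤ M₀)
    (hbound : ∃ K : ℝ, ∀ u v,
      ‖(J u).mulVec ((f v (θmap u))⁻¹ • h v (θmap u))‖ ≤ K)
    (p : ℝ) (hp : 2 < p)
    (hmom : Integrable
      (fun z : U × V => |f z.2 (θmap z.1) / ∫ v, f v (θmap z.1) ∂μV| ^ p)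
      (μU.prod μV)) :
    ∃ C : ℝ, 0 < C ∧ ∀ ℓ : ℕ, 1 ≤ ℓ →
      ∫⁻ u, ∫⁻ v : Fin (M₀ * 2 ^ ℓ) → V,
          ENNReal.ofReal (∑ j : Fin ddim,
            ((J u).mulVec
              ((∑ i, f (v i) (θmap u))⁻¹ • (∑ i, h (v i) (θmap u))
                - (1 / 2 : ℝ) •
                  (((∑ i ∈ Finset.univ.filter
                        (fun i : Fin (M₀ * 2 ^ ℓ) => (i : ℕ) < M₀ * 2 ^ (ℓ - 1)),
                      f (v i) (θmap u))⁻¹ •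
                    (∑ i ∈ Finset.univ.filter
                        (fun i : Fin (M₀ * 2 ^ ℓ) => (i : ℕ) < M₀ * 2 ^ (ℓ - 1)),
                      h (v i) (θmap u)))
                  + ((∑ i ∈ Finset.univ.filter
                        (fun i : Fin (M₀ * 2 ^ ℓ) => ¬ (i : ℕ) < M₀ * 2 ^ (ℓ - 1)),
                      f (v i) (θmap u))⁻¹ •
                    (∑ i ∈ Finset.univ.filter
                        (fun i : Fin (M₀ * 2 ^ ℓ) => ¬ (i : ℕ) < M₀ * 2 ^ (ℓ - 1)),
                      h (v i) (θmap u)))))) j ^ 2)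
        ∂(Measure.pi fun _ => μV) ∂μU
      ≤ ENNReal.ofReal (C * (2 : ℝ) ^ (-(min (p / 2) 2) * ℓ)) := by
  obtain ⟨K', hK'⟩ := hbound
  set K := max K' 1 with hKdef
  have hK1 : 1 ≤ K := le_max_right _ _
  set q := min p 4 with hq
  have hq2 : 2 ≤ q := le_min hp.le (by norm_num)
  have hq4 : q ≤ 4 := min_le_right _ _
  have hqp : q ≤ p := min_le_left _ _
  have hqr : min (p / 2) 2 = q / 2 := by
    rw [hq, ← min_div_div_right (by norm_num : (0:ℝ) ≤ 2)]; norm_num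
  set A : ℝ := 16 * K ^ 2 * (4 * (40 * Real.exp 20 * (16 * K ^ 4))) with hA
  have hA0 : 0 < A := by positivity
  set w : U → V → ℝ := fun u v => f v (θmap u) / ∫ v, f v (θmap u) ∂μV with hw
  have hw0 : ∀ u v, 0 < w u v := fun u v => div_pos (hf_pos _ _) (hμ u).2
  set Z : U → ℝ := fun u => ∫ v, |w u v| ^ p ∂μV with hZ
  have hZi : Integrable Z μU := hmom.integral_prod_left
  have hZ0 : ∀ u, 0 ≤ Z u := fun u => integral_nonneg fun v => by positivity
  set B : ℝ := ∫ u, (2 + Z u) ∂μU with hB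
  have hB0 : 0 ≤ B := integral_nonneg fun u => by
    change 0 ≤ 2 + Z u
    linarith [hZ0 u]
  refine ⟨(ddim * A * B + 1) * 2 ^ (q / 2), by positivity, ?_⟩
  intro ℓ hℓ
  obtain ⟨k, rfl⟩ : ∃ k, ℓ = k + 1 := ⟨ℓ - 1, by omega⟩
  rw [Nat.add_sub_cancel]
  set N : ℕ := M₀ * 2 ^ k with hN
  have hNN : M₀ * 2 ^ (k + 1) = 2 * N := by rw [hN, pow_succ]; ring
  have hN1 : 1 ≤ N := Nat.mul_pos hM₀ (by positivity)
  have hN0 : (0:ℝ) < N := by exact_mod_cast hN1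
  set s : Finset (Fin (M₀ * 2 ^ (k + 1))) :=
    Finset.univ.filter (fun i : Fin (M₀ * 2 ^ (k + 1)) => (i : ℕ) < N) with hs
  set t : Finset (Fin (M₀ * 2 ^ (k + 1))) :=
    Finset.univ.filter (fun i : Fin (M₀ * 2 ^ (k + 1)) => ¬ (i : ℕ) < N) with ht
  have hsc : s.card = N := by
    rw [hs, Fin.card_filter_val_lt]
    omega
  have htc : t.card = N := by
    have := Finset.card_filter_add_card_filter_not (s := (Finset.univ : Finset (Fin (M₀ * 2 ^ (k + 1)))))
      (fun i : Fin (M₀ * 2 ^ (k + 1)) => (i : ℕ) < N)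
    rw [Finset.card_univ, Fintype.card_fin] at this
    change s.card + t.card = _ at this
    omega
  have hsplit : ∀ {E : Type} [AddCommMonoid E] (a : Fin (M₀ * 2 ^ (k + 1)) → E),
      ∑ i, a i = ∑ i ∈ s, a i + ∑ i ∈ t, a i := fun a =>
    (Finset.sum_filter_add_sum_filter_not _ _ _).symm
  -- the bound for fixed u
  have hinner : ∀ᵐ u ∂μU, ∫⁻ v : Fin (M₀ * 2 ^ (k + 1)) → V,
          ENNReal.ofReal (∑ j : Fin ddim,
            ((J u).mulVec
              ((∑ i, f (v i) (θmap u))⁻¹ • (∑ i, h (v i) (θmap u))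
                - (1 / 2 : ℝ) •
                  (((∑ i ∈ s, f (v i) (θmap u))⁻¹ • (∑ i ∈ s, h (v i) (θmap u)))
                  + ((∑ i ∈ t, f (v i) (θmap u))⁻¹ • (∑ i ∈ t, h (v i) (θmap u)))))) j ^ 2)
        ∂(Measure.pi fun _ => μV) ≤
      ENNReal.ofReal (ddim * (A * (N:ℝ) ^ (-(q / 2))) * (2 + Z u)) := by
    filter_upwards [hmom.prod_right_ae] with u hu
    set c := ∫ v, f v (θmap u) ∂μV with hc
    have hc0 : 0 < c := (hμ u).2
    set g : Fin ddim → V → ℝ :=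
      fun j v => ((J u).mulVec ((f v (θmap u))⁻¹ • h v (θmap u))) j with hg
    have hfm : Measurable fun v => f v (θmap u) := hf_meas.comp measurable_prodMk_left
    have hhm : Measurable fun v => h v (θmap u) := hh_meas.comp measurable_prodMk_left
    have hwm : Measurable (w u) := hfm.div_const _
    have hgm : ∀ j, Measurable (g j) := by
      intro j
      simp only [hg, Matrix.mulVec, dotProduct, Pi.smul_apply, smul_eq_mul]
      refine Finset.measurable_sum _ fun i _ => ?_
      exact (hfm.inv.mul ((measurable_pi_apply i).comp hhm)).const_mul _
    have hgK : ∀ j v, |g j v| ≤ K := fun j v =>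
      ((norm_le_pi_norm _ j).trans (hK' u v)).trans (le_max_left _ _)
    have hwq_le : ∀ v, w u v ^ q ≤ 1 + |w u v| ^ p := by
      intro v
      have h0 := hw0 u v
      rw [abs_of_pos h0]
      by_cases h1 : w u v ≤ 1
      · have := Real.rpow_le_one h0.le h1 (show 0 ≤ q by linarith)
        have := Real.rpow_nonneg h0.le p
        linarith
      · push Not at h1
        have := Real.rpow_le_rpow_of_exponent_le h1.le hqp
        linarith
    have hwqi : Integrable (fun v => w u v ^ q) μV := by
      refine Integrable.mono' ((integrable_const (1:ℝ)).add hu)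
        (hwm.pow_const q).aestronglyMeasurable (Filter.Eventually.of_forall fun v => ?_)
      rw [Real.norm_eq_abs, abs_of_nonneg (Real.rpow_nonneg (hw0 u v).le _)]
      exact hwq_le v
    have hwqI : ∫ v, w u v ^ q ∂μV ≤ 1 + Z u := by
      have := integral_mono hwqi ((integrable_const (1:ℝ)).add hu) hwq_le
      simp only [Pi.add_apply] at this
      rw [integral_add (integrable_const _) hu] at this
      simpa only [integral_const, probReal_univ, smul_eq_mul, mul_one] using this
    have hcore := fun j => aux_core μV (w u) (g j) hwm (hgm j) (hw0 u) ((hμ u).1.div_const _)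
      (by simp only [hw]; rw [integral_div, div_self hc0.ne']) q hq2 hq4 hwqi K hK1 (hgK j)
      N hN1 s t hsc htc
    choose G hGi hGle hGI using hcore
    have hterm : ∀ (j : Fin ddim) (v : Fin (M₀ * 2 ^ (k + 1)) → V),
        ((J u).mulVec
              ((∑ i, f (v i) (θmap u))⁻¹ • (∑ i, h (v i) (θmap u))
                - (1 / 2 : ℝ) •
                  (((∑ i ∈ s, f (v i) (θmap u))⁻¹ • (∑ i ∈ s, h (v i) (θmap u)))
                  + ((∑ i ∈ t, f (v i) (θmap u))⁻¹ • (∑ i ∈ t, h (v i) (θmap u)))))) j ^ 2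
          ≤ G j v := by
      intro j v
      refine le_trans (le_of_eq ?_) (hGle j v)
      have hJ : ∀ r : Finset (Fin (M₀ * 2 ^ (k + 1))),
          (J u).mulVec (∑ i ∈ r, h (v i) (θmap u)) j
            = c * ∑ i ∈ r, w u (v i) * g j (v i) := by
        intro r
        rw [Matrix.mulVec_sum, Finset.sum_apply, Finset.mul_sum]
        refine Finset.sum_congr rfl fun i _ => ?_
        simp only [hg, hw, Matrix.mulVec_smul, Pi.smul_apply, smul_eq_mul]
        have := (hf_pos (v i) (θmap u)).ne'
        rw [← hc]
        field_simp
      have hF : ∀ r : Finset (Fin (M₀ * 2 ^ (k + 1))),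
          ∑ i ∈ r, f (v i) (θmap u) = c * ∑ i ∈ r, w u (v i) := by
        intro r
        rw [Finset.mul_sum]
        refine Finset.sum_congr rfl fun i _ => ?_
        simp only [hw]
        rw [← hc]
        field_simp
      have hcancel : ∀ a b : ℝ, (c * a)⁻¹ * (c * b) = b / a := by
        intro a b
        rw [inv_mul_eq_div, mul_div_mul_left _ _ hc0.ne']
      simp only [Matrix.mulVec_sub, Matrix.mulVec_smul, Matrix.mulVec_add, Pi.sub_apply,
        Pi.smul_apply, Pi.add_apply, smul_eq_mul, hJ, hF, hcancel]
      rw [hsplit, hsplit]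
    have hG0 : ∀ j v, 0 ≤ G j v := fun j v => (sq_nonneg _).trans (hGle j v)
    calc _ ≤ ∫⁻ v, ENNReal.ofReal (∑ j, G j v) ∂(Measure.pi fun _ => μV) :=
          lintegral_mono fun v =>
            ENNReal.ofReal_le_ofReal (Finset.sum_le_sum fun j _ => hterm j v)
      _ = ENNReal.ofReal (∫ v, ∑ j, G j v ∂(Measure.pi fun _ => μV)) :=
          (ofReal_integral_eq_lintegral_ofReal (integrable_finsetSum _ fun j _ => hGi j)
            (Filter.Eventually.of_forall fun v => Finset.sum_nonneg fun j _ => hG0 j v)).symm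
      _ ≤ _ := by
          refine ENNReal.ofReal_le_ofReal ?_
          rw [integral_finsetSum _ fun j _ => hGi j]
          calc _ ≤ ∑ j : Fin ddim, A * (N:ℝ) ^ (-(q / 2)) * (2 + Z u) := by
                refine Finset.sum_le_sum fun j _ => (hGI j).trans ?_
                refine mul_le_mul_of_nonneg_left ?_ (by positivity)
                linarith
            _ = _ := by
                simp only [Finset.sum_const, Finset.card_univ, Fintype.card_fin, nsmul_eq_mul]
                ring
  refine (lintegral_mono_ae hinner).trans ?_
  have hi2 : Integrable (fun u => 2 + Z u) μU := (integrable_const _).add hZi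
  rw [← ofReal_integral_eq_lintegral_ofReal (hi2.const_mul _)
    (Filter.Eventually.of_forall fun u => by
      have := hZ0 u
      change 0 ≤ ddim * (A * (N:ℝ) ^ (-(q / 2))) * (2 + Z u)
      positivity), integral_const_mul, ← hB]
  refine ENNReal.ofReal_le_ofReal ?_
  rw [hqr]
  have hNle : (N:ℝ) ^ (-(q / 2)) ≤ 2 ^ (q / 2) * 2 ^ (-(q / 2) * ((k + 1 : ℕ) : ℝ)) := by
    have h2k : ((2:ℝ) ^ k) ≤ N := by
      rw [hN]; push_cast
      exact le_mul_of_one_le_left (by positivity) (by exact_mod_cast hM₀)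
    calc (N:ℝ) ^ (-(q / 2)) ≤ ((2:ℝ) ^ k) ^ (-(q / 2)) :=
          Real.rpow_le_rpow_of_nonpos (by positivity) h2k (by linarith)
      _ = _ := by
          rw [← Real.rpow_natCast, ← Real.rpow_mul (by norm_num), ← Real.rpow_add (by norm_num)]
          congr 1; push_cast; ring
  have hpow : (0:ℝ) ≤ 2 ^ (q / 2) * 2 ^ (-(q / 2) * ((k + 1 : ℕ) : ℝ)) := by positivity
  calc ddim * (A * (N:ℝ) ^ (-(q / 2))) * B = (ddim * A * B) * (N:ℝ) ^ (-(q / 2)) := by ring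
    _ ≤ (ddim * A * B) * (2 ^ (q / 2) * 2 ^ (-(q / 2) * ((k + 1 : ℕ) : ℝ))) :=
        mul_le_mul_of_nonneg_left hNle (by positivity)
    _ ≤ (ddim * A * B + 1) * (2 ^ (q / 2) * 2 ^ (-(q / 2) * ((k + 1 : ℕ) : ℝ))) := by
        refine mul_le_mul_of_nonneg_right (by linarith) hpow
    _ = _ := by ring
end
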